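/- arXiv:2301.03917 — 2 statements merged into one kernel-verified Lean document; each statement's English description precedes it below -/
import Mathlib

section
/- Let $G$ be a finite group of order $2^n$ with $n \ge 3$. Every irreducible complex character $\chi$ of $G$ that is non-linear (that is, $\chi(1) > 1$) satisfies $\chi(g) = 0$ for at least $2^{n-1}+2$ elements $g \in G$. Furthermore, there exists a non-linear irreducible complex character $\chi$ of $G$ that vanishes at exactly $2^{n-1}+2$ elements of $G$ if and only if one of the following holds: - $G$ is isomorphic to the dihedral group $\langle a, b \mid a^{2^{n-1}} = b^2 = 1,\ bab^{-1} = a^{-1}\rangle$ of order $2^n$; - $G$ is isomorphic to the generalized quaternion group $\langle a, b \mid a^{2^{n-1}} = 1,\ b^2 = a^{2^{n-2}},\ bab^{-1} = a^{-1}\rangle$ of order $2^n$; - $n \ge 4$ and $G$ is isomorphic to the semidihedral group $\langle a, b \mid a^{2^{n-1}} = b^2 = 1,\ bab^{-1} = a^{2^{n-2}-1}\rangle$ of order $2^n$. -/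
open CategoryTheory

/-- The relators of the semidihedral group of order `2^n` (`n ≥ 4`):
`a^(2^(n-1)) = b^2 = 1`, `b * a * b⁻¹ = a^(2^(n-2) - 1)`, where `a = of 0` and `b = of 1`. -/
def semidihedralRels (n : ℕ) : Set (FreeGroup (Fin 2)) :=
  {(FreeGroup.of 0) ^ (2 ^ (n - 1)),
   (FreeGroup.of 1) ^ 2,
   FreeGroup.of 1 * FreeGroup.of 0 * (FreeGroup.of 1)⁻¹ * ((FreeGroup.of 0) ^ (2 ^ (n - 2) - 1))⁻¹}

/-- The presented group `⟨a, b ∣ a^(2^(n-1)) = b^2 = 1, b a b⁻¹ = a^(2^(n-2) - 1)⟩`.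
It is the semidihedral group of order `2^n` when `n ≥ 4`; smaller `n` are meaningless
(for `n = 3` the presentation gives the abelian group `C₄ × C₂`). -/
def SemidihedralGroup (n : ℕ) : Type := PresentedGroup (semidihedralRels n)

instance SemidihedralGroup.instGroup (n : ℕ) : Group (SemidihedralGroup n) :=
  inferInstanceAs (Group (PresentedGroup (semidihedralRels n)))

namespace Representation

open Module

section Irreducible

variable {k G V : Type*} [Field k] [Group G] [AddCommGroup V] [Module k V]

/-- Irreducibility in terms of invariant submodules. -/
theorem isIrreducible_iff_forall_submodule (ρ : Representation k G V) :
    ρ.IsIrreducible ↔ Nontrivial V ∧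
      ∀ U : Submodule k V, (∀ g, ∀ v ∈ U, ρ g v ∈ U) → U = ⊥ ∨ U = ⊤ := by
  constructor
  · intro h
    refine ⟨?_, fun U hU ↦ ?_⟩
    · by_contra hV
      rw [not_nontrivial_iff_subsingleton] at hV
      refine (bot_ne_top (α := Subrepresentation ρ)) ?_
      apply Subrepresentation.toSubmodule_injective
      exact Subsingleton.elim _ _
    · rcases h.eq_bot_or_eq_top ⟨U, hU⟩ with h | h
      · exact Or.inl (congrArg Subrepresentation.toSubmodule h)
      · exact Or.inr (congrArg Subrepresentation.toSubmodule h)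
  · rintro ⟨hV, h⟩
    refine { exists_pair_ne := ⟨⊥, ⊤, fun e ↦ ?_⟩, eq_bot_or_eq_top := fun U ↦ ?_ }
    · exact bot_ne_top (α := Submodule k V) (congrArg Subrepresentation.toSubmodule e)
    · rcases h U.toSubmodule (fun g v hv ↦ U.apply_mem_toSubmodule g hv) with h | h
      · exact Or.inl (Subrepresentation.toSubmodule_injective h)
      · exact Or.inr (Subrepresentation.toSubmodule_injective h)

/-- **Schur's lemma**: an endomorphism commuting with an irreducible representation is a scalar. -/
theorem IsIrreducible.exists_eq_smul_one [IsAlgClosed k] [FiniteDimensional k V]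
    {ρ : Representation k G V} (hρ : ρ.IsIrreducible) (T : End k V)
    (hT : ∀ g, ρ g * T = T * ρ g) : ∃ c : k, T = c • 1 := by
  obtain ⟨hV, h⟩ := ρ.isIrreducible_iff_forall_submodule.1 hρ
  obtain ⟨c, hc⟩ := End.exists_eigenvalue T
  refine ⟨c, ?_⟩
  have hinv : ∀ g, ∀ v ∈ T.eigenspace c, ρ g v ∈ T.eigenspace c := by
    intro g v hv
    rw [End.mem_eigenspace_iff] at hv ⊢
    have := LinearMap.congr_fun (hT g) v
    simp only [End.mul_apply] at this
    rw [← this, hv, map_smul]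
  rcases h (T.eigenspace c) hinv with h | h
  · exact absurd h hc
  · ext v
    have : v ∈ T.eigenspace c := h ▸ Submodule.mem_top
    simpa using End.mem_eigenspace_iff.1 this

end Irreducible

section Scalars

variable {k G V : Type*} [Field k] [Group G] [AddCommGroup V] [Module k V]

/-- The subgroup of elements acting as scalars. -/
def scalarSubgroup (ρ : Representation k G V) : Subgroup G where
  carrier := {g | ∃ c : k, ρ g = c • 1}
  mul_mem' := by
    rintro g h ⟨c, hc⟩ ⟨d, hd⟩
    exact ⟨c * d, by rw [map_mul, hc, hd, smul_mul_assoc, one_mul, smul_smul]⟩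
  one_mem' := ⟨1, by simp⟩
  inv_mem' := by
    rintro g ⟨c, hc⟩
    by_cases h0 : c = 0
    · have h1 : ρ g * ρ g⁻¹ = 1 := by rw [← map_mul, mul_inv_cancel, map_one]
      rw [hc, h0, zero_smul, zero_mul] at h1
      exact ⟨1, by rw [← one_mul (ρ g⁻¹), ← h1, zero_mul, smul_zero]⟩
    · have h1 : ρ g * ρ g⁻¹ = 1 := by rw [← map_mul, mul_inv_cancel, map_one]
      refine ⟨c⁻¹, ?_⟩
      rw [hc, smul_mul_assoc, one_mul] at h1
      rw [← h1, smul_smul, inv_mul_cancel₀ h0, one_smul]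

instance (ρ : Representation k G V) : ρ.scalarSubgroup.Normal where
  conj_mem := by
    rintro n ⟨c, hc⟩ g
    refine ⟨c, ?_⟩
    rw [map_mul, map_mul, hc, mul_smul_comm, mul_one, smul_mul_assoc, ← map_mul,
      mul_inv_cancel, map_one]

theorem IsIrreducible.scalarSubgroup_ne_top {ρ : Representation k G V}
    (hρ : ρ.IsIrreducible) (hd : 1 < finrank k V) : ρ.scalarSubgroup ≠ ⊤ := by
  intro htop
  obtain ⟨hV, h⟩ := ρ.isIrreducible_iff_forall_submodule.1 hρ
  obtain ⟨v, hv⟩ := exists_ne (0 : V)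
  have hinv : ∀ g, ∀ w ∈ k ∙ v, ρ g w ∈ k ∙ v := by
    intro g w hw
    obtain ⟨c, hc⟩ : g ∈ ρ.scalarSubgroup := htop ▸ Subgroup.mem_top g
    rw [hc]
    exact Submodule.smul_mem _ c hw
  rcases h (k ∙ v) hinv with h | h
  · exact hv (Submodule.span_singleton_eq_bot.1 h)
  · have := finrank_span_singleton (K := k) hv
    rw [h, finrank_top] at this
    omega

/-- A group element acting as an involution modulo scalars which commutes modulo signs with the
whole image of the representation, but does not act as a scalar. -/
structure IsSplitting (ρ : Representation k G V) (a : G) (s : k) : Prop where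
  ne_zero : s ≠ 0
  sq : ρ a * ρ a = s • 1
  comm_or : ∀ g, ρ g * ρ a = ρ a * ρ g ∨ ρ g * ρ a = -(ρ a * ρ g)
  notMem : a ∉ ρ.scalarSubgroup

theorem IsIrreducible.exists_isSplitting {ρ : Representation k G V} [Finite G]
    (hG : IsPGroup 2 G) (hρ : ρ.IsIrreducible) (hd : 1 < finrank k V) :
    ∃ a s, ρ.IsSplitting a s := by
  obtain ⟨hV, -⟩ := ρ.isIrreducible_iff_forall_submodule.1 hρ
  have hQ : IsPGroup 2 (G ⧸ ρ.scalarSubgroup) := hG.to_quotient _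
  have : Nontrivial (G ⧸ ρ.scalarSubgroup) :=
    QuotientGroup.nontrivial_iff.2 (hρ.scalarSubgroup_ne_top hd)
  have hC := hQ.center_nontrivial
  have hZ : IsPGroup 2 (Subgroup.center (G ⧸ ρ.scalarSubgroup)) := hQ.to_subgroup _
  obtain ⟨m, hm0, hm⟩ := hZ.nontrivial_iff_card.1 hC
  obtain ⟨⟨q, hqc⟩, hq⟩ := exists_prime_orderOf_dvd_card' 2
    (hm ▸ dvd_pow_self 2 hm0.ne' : 2 ∣ Nat.card (Subgroup.center (G ⧸ ρ.scalarSubgroup)))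
  rw [Subgroup.orderOf_mk] at hq
  obtain ⟨a, rfl⟩ := QuotientGroup.mk_surjective q
  have ha : a ∉ ρ.scalarSubgroup := by
    intro h
    rw [(QuotientGroup.eq_one_iff a).2 h, orderOf_one] at hq
    omega
  have ha2 : a * a ∈ ρ.scalarSubgroup := by
    rw [← QuotientGroup.eq_one_iff, ← pow_two, QuotientGroup.mk_pow, ← hq, pow_orderOf_eq_one]
  obtain ⟨s, hs⟩ := ha2
  rw [map_mul] at hs
  have hs0 : s ≠ 0 := by
    rintro rfl
    have h1 : ρ (a * a) * ρ (a * a)⁻¹ = 1 := by rw [← map_mul, mul_inv_cancel, map_one]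
    rw [map_mul, hs, zero_smul, zero_mul] at h1
    exact zero_ne_one h1
  refine ⟨a, s, hs0, hs, fun g ↦ ?_, ha⟩
  have hg : g * a * (a * g)⁻¹ ∈ ρ.scalarSubgroup := by
    rw [← QuotientGroup.eq_one_iff, QuotientGroup.mk_mul, QuotientGroup.mk_mul,
      QuotientGroup.mk_inv, QuotientGroup.mk_mul, Subgroup.mem_center_iff.1 hqc, mul_inv_cancel]
  obtain ⟨c, hc⟩ := hg
  have h1 : ρ g * ρ a = c • (ρ a * ρ g) := by
    have : ρ (g * a * (a * g)⁻¹ * (a * g)) = c • ρ (a * g) := by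
      rw [map_mul, hc, smul_mul_assoc, one_mul]
    rwa [inv_mul_cancel_right, map_mul, map_mul] at this
  have h2 : s • ρ g = (c * c * s) • ρ g := by
    calc s • ρ g = ρ g * (ρ a * ρ a) := by rw [hs, mul_smul_comm, mul_one]
      _ = (ρ g * ρ a) * ρ a := by rw [mul_assoc]
      _ = c • (ρ a * (ρ g * ρ a)) := by rw [← mul_assoc, ← smul_mul_assoc, ← h1]
      _ = (c * c) • ((ρ a * ρ a) * ρ g) := by
        rw [h1, mul_smul_comm, smul_smul, mul_assoc]
      _ = _ := by rw [hs, smul_mul_assoc, one_mul, smul_smul]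
  have hg0 : ρ g ≠ 0 := by
    intro h
    have h1 : ρ g * ρ g⁻¹ = 1 := by rw [← map_mul, mul_inv_cancel, map_one]
    rw [h, zero_mul] at h1
    exact zero_ne_one h1
  have h3 : c * c = 1 := by
    have := smul_left_injective k hg0 h2
    exact mul_right_cancel₀ hs0 (by rw [one_mul]; exact this.symm)
  rcases mul_self_eq_one_iff.1 h3 with h | h
  · left; rw [h1, h, one_smul]
  · right; rw [h1, h, neg_smul, one_smul]

variable [IsAlgClosed k] [FiniteDimensional k V]

theorem IsIrreducible.mem_scalarSubgroup_of_commute {ρ : Representation k G V}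
    (hρ : ρ.IsIrreducible) {a : G} (ha : ∀ g, ρ g * ρ a = ρ a * ρ g) :
    a ∈ ρ.scalarSubgroup :=
  hρ.exists_eq_smul_one (ρ a) ha

theorem IsIrreducible.center_le_scalarSubgroup {ρ : Representation k G V}
    (hρ : ρ.IsIrreducible) : Subgroup.center G ≤ ρ.scalarSubgroup := by
  intro z hz
  refine hρ.mem_scalarSubgroup_of_commute fun g ↦ ?_
  rw [← map_mul, ← map_mul, Subgroup.mem_center_iff.1 hz g]

end Scalars

end Representation

namespace Representation

open Module

section Splitting

variable {k G V : Type*} [Field k] [Group G] [AddCommGroup V] [Module k V]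

/-- The elements whose action commutes with that of `a`. -/
def commutingSubgroup (ρ : Representation k G V) (a : G) : Subgroup G where
  carrier := {g | ρ g * ρ a = ρ a * ρ g}
  mul_mem' := by
    intro g h hg hh
    simp only [Set.mem_ofPred_eq] at hg hh ⊢
    rw [map_mul, mul_assoc, hh, ← mul_assoc, hg, mul_assoc]
  one_mem' := by simp
  inv_mem' := by
    intro g hg
    simp only [Set.mem_ofPred_eq] at hg ⊢
    have h1 : ρ g⁻¹ * ρ g = 1 := by rw [← map_mul, inv_mul_cancel, map_one]
    have h2 : ρ g * ρ g⁻¹ = 1 := by rw [← map_mul, mul_inv_cancel, map_one]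
    calc ρ g⁻¹ * ρ a = ρ g⁻¹ * (ρ a * ρ g) * ρ g⁻¹ := by
          rw [mul_assoc, mul_assoc, h2, mul_one]
      _ = ρ a * ρ g⁻¹ := by rw [← hg, ← mul_assoc, h1, one_mul]

theorem mem_commutingSubgroup {ρ : Representation k G V} {a g : G} :
    g ∈ ρ.commutingSubgroup a ↔ ρ g * ρ a = ρ a * ρ g := Iff.rfl

/-- If the actions of `g` and `h` anticommute, then the character vanishes at `g`. -/
theorem character_eq_zero_of_anticommute [CharZero k] (ρ : Representation k G V) {g h : G}
    (hgh : ρ g * ρ h = -(ρ h * ρ g)) : ρ.character g = 0 := by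
  have h1 : ρ.character g = -ρ.character g := by
    calc ρ.character g = LinearMap.trace k V (ρ g * ρ h * ρ h⁻¹) := by
          rw [mul_assoc, ← map_mul ρ h, mul_inv_cancel, map_one, mul_one, character]
      _ = -LinearMap.trace k V (ρ h * ρ g * ρ h⁻¹) := by rw [hgh, neg_mul, map_neg]
      _ = -ρ.character g := by rw [← map_mul, ← map_mul, ← character, char_conj]
  exact self_eq_neg.1 h1

namespace IsSplitting

variable {ρ : Representation k G V} {a : G} {s : k}

theorem anticommute (ha : ρ.IsSplitting a s) {g : G} (hg : g ∉ ρ.commutingSubgroup a) :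
    ρ g * ρ a = -(ρ a * ρ g) :=
  (ha.comm_or g).resolve_left hg

theorem character_eq_zero (ha : ρ.IsSplitting a s) [CharZero k] {g : G} (hg :
    g ∉ ρ.commutingSubgroup a) :
    ρ.character g = 0 :=
  ρ.character_eq_zero_of_anticommute (ha.anticommute hg)

theorem exists_notMem (ha : ρ.IsSplitting a s) [IsAlgClosed k] [FiniteDimensional k V] (hρ :
    ρ.IsIrreducible) :
    ∃ b, b ∉ ρ.commutingSubgroup a := by
  by_contra! h
  exact ha.notMem (hρ.mem_scalarSubgroup_of_commute h)

theorem index_commutingSubgroup (ha : ρ.IsSplitting a s) [IsAlgClosed k] [FiniteDimensional k V]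
    (hρ : ρ.IsIrreducible) :
    (ρ.commutingSubgroup a).index = 2 := by
  obtain ⟨b, hb⟩ := ha.exists_notMem hρ
  refine Subgroup.index_eq_two_iff_exists_notMem_and.2 ⟨b, hb, fun g ↦ ?_⟩
  by_cases hg : g ∈ ρ.commutingSubgroup a
  · exact Or.inr hg
  · left
    rw [mem_commutingSubgroup, map_mul, mul_assoc, ha.anticommute hb, mul_neg, ← mul_assoc,
      ha.anticommute hg, neg_mul, neg_neg, mul_assoc]

theorem character_self (ha : ρ.IsSplitting a s) [CharZero k] [IsAlgClosed k] [FiniteDimensional k V]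
    (hρ : ρ.IsIrreducible) : ρ.character a = 0 := by
  obtain ⟨b, hb⟩ := ha.exists_notMem hρ
  refine ρ.character_eq_zero_of_anticommute (h := b) ?_
  rw [ha.anticommute hb, neg_neg]

/-- The eigenspaces of the splitting element for the two square roots of `s` are complementary. -/
theorem isCompl_eigenspace (ha : ρ.IsSplitting a s) [CharZero k] {μ : k} (hμ : μ * μ = s) :
    IsCompl (End.eigenspace (ρ a) μ) (End.eigenspace (ρ a) (-μ)) := by
  have hμ0 : μ ≠ 0 := by rintro rfl; exact ha.ne_zero (by rw [← hμ, mul_zero])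
  refine ⟨Submodule.disjoint_def.2 fun v hv hv' ↦ ?_, codisjoint_iff.2 (eq_top_iff.2 fun v _ ↦ ?_)⟩
  · rw [End.mem_eigenspace_iff] at hv hv'
    rw [hv, ← sub_eq_zero, ← sub_smul, sub_neg_eq_add, ← two_mul, smul_eq_zero] at hv'
    exact hv'.resolve_left (mul_ne_zero two_ne_zero hμ0)
  · have hT : ρ a (ρ a v) = (μ * μ) • v := by
      have := LinearMap.congr_fun ha.sq v
      rwa [← hμ] at this
    refine Submodule.mem_sup.2 ⟨(2 : k)⁻¹ • (v + μ⁻¹ • ρ a v), ?_,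
      (2 : k)⁻¹ • (v - μ⁻¹ • ρ a v), ?_, ?_⟩
    · rw [End.mem_eigenspace_iff]
      simp only [map_smul, map_add, hT, smul_smul, smul_add]
      rw [add_comm]
      congr 2 <;> field_simp
    · rw [End.mem_eigenspace_iff]
      simp only [map_smul, map_sub, hT, smul_smul, smul_sub]
      rw [← neg_sub, ← neg_one_smul k, smul_sub, smul_smul, smul_smul]
      congr 2 <;> field_simp
    · rw [← smul_add, add_add_sub_cancel, ← two_smul k v, smul_smul, inv_mul_cancel₀ two_ne_zero,
        one_smul]

theorem apply_mem_eigenspace {μ : k} {g : G} (hg : g ∈ ρ.commutingSubgroup a) {v : V}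
    (hv : v ∈ End.eigenspace (ρ a) μ) : ρ g v ∈ End.eigenspace (ρ a) μ := by
  rw [End.mem_eigenspace_iff] at hv ⊢
  have := LinearMap.congr_fun hg v
  simp only [End.mul_apply] at this
  rw [← this, hv, map_smul]

theorem apply_mem_eigenspace_neg (ha : ρ.IsSplitting a s) {μ : k} {g : G} (hg :
    g ∉ ρ.commutingSubgroup a) {v : V}
    (hv : v ∈ End.eigenspace (ρ a) μ) : ρ g v ∈ End.eigenspace (ρ a) (-μ) := by
  rw [End.mem_eigenspace_iff] at hv ⊢
  have := LinearMap.congr_fun (ha.anticommute hg) v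
  simp only [End.mul_apply, LinearMap.neg_apply] at this
  rw [← neg_eq_iff_eq_neg.2 this, hv, map_smul, neg_smul]

theorem finrank_eigenspace_le (ha : ρ.IsSplitting a s) [IsAlgClosed k] [FiniteDimensional k V]
    (hρ : ρ.IsIrreducible)
    (μ : k) : finrank k (End.eigenspace (ρ a) μ) ≤ finrank k (End.eigenspace (ρ a) (-μ)) := by
  obtain ⟨b, hb⟩ := ha.exists_notMem hρ
  refine LinearMap.finrank_le_finrank_of_injective
    (f := (ρ b).restrict fun v hv ↦ ha.apply_mem_eigenspace_neg hb hv) ?_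
  intro u v huv
  have h1 : ρ b u = ρ b v := congrArg Subtype.val huv
  exact Subtype.ext ((ρ.apply_bijective b).1 h1)

theorem two_mul_finrank_eigenspace (ha :
    ρ.IsSplitting a s) [CharZero k] [IsAlgClosed k] [FiniteDimensional k V]
    (hρ : ρ.IsIrreducible) {μ : k} (hμ : μ * μ = s) :
    2 * finrank k (End.eigenspace (ρ a) μ) = finrank k V := by
  have h1 := ha.finrank_eigenspace_le hρ μ
  have h2 := ha.finrank_eigenspace_le hρ (-μ)
  rw [neg_neg] at h2
  have h3 := Submodule.finrank_add_eq_of_isCompl (ha.isCompl_eigenspace hμ)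
  omega

/-- An eigenspace of `ρ a` as a subrepresentation of the restriction to the elements commuting
with `a`. -/
def _root_.Representation.eigenSubrepresentation (ρ : Representation k G V) (a : G) (μ : k) :
    Subrepresentation (ρ.comp (ρ.commutingSubgroup a).subtype) where
  toSubmodule := End.eigenspace (ρ a) μ
  apply_mem_toSubmodule h _ hv := apply_mem_eigenspace h.2 hv

theorem isIrreducible_eigenSubrepresentation (ha :
    ρ.IsSplitting a s) [CharZero k] [IsAlgClosed k] [FiniteDimensional k V]
    (hρ : ρ.IsIrreducible) {μ : k} (hμ : μ * μ = s) :
    (ρ.eigenSubrepresentation a μ).toRepresentation.IsIrreducible := by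
  obtain ⟨hV, hirr⟩ := ρ.isIrreducible_iff_forall_submodule.1 hρ
  obtain ⟨b, hb⟩ := ha.exists_notMem hρ
  have hindex := ha.index_commutingSubgroup hρ
  rw [isIrreducible_iff_forall_submodule]
  constructor
  · have h1 := ha.two_mul_finrank_eigenspace hρ hμ
    have h2 : 0 < finrank k V := finrank_pos
    exact nontrivial_of_finrank_pos (R := k) (M := End.eigenspace (ρ a) μ) (by omega)
  · intro U hU
    set U' : Submodule k V := U.map (End.eigenspace (ρ a) μ).subtype with hU'
    have hle : U' ≤ End.eigenspace (ρ a) μ := Submodule.map_subtype_le _ _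
    have hinv : ∀ g ∈ ρ.commutingSubgroup a, ∀ v ∈ U', ρ g v ∈ U' := by
      rintro g hg _ ⟨v, hv, rfl⟩
      exact ⟨_, hU ⟨g, hg⟩ v hv, rfl⟩
    have hb' : ∀ g, ρ g = ρ b * ρ (b⁻¹ * g) := fun g ↦ by rw [← map_mul, mul_inv_cancel_left]
    have hS : ∀ g, ∀ v ∈ U' ⊔ U'.map (ρ b), ρ g v ∈ U' ⊔ U'.map (ρ b) := by
      intro g v hv
      obtain ⟨u, hu, _, ⟨w, hw, rfl⟩, rfl⟩ := Submodule.mem_sup.1 hv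
      rw [map_add, ← End.mul_apply, ← map_mul]
      by_cases hg : g ∈ ρ.commutingSubgroup a
      · refine add_mem (Submodule.mem_sup_left (hinv g hg u hu)) (Submodule.mem_sup_right ?_)
        refine ⟨ρ (b⁻¹ * (g * b)) w, hinv _ ?_ w hw, ?_⟩
        · simp [Subgroup.mul_mem_iff_of_index_two hindex, hg]
        · rw [hb' (g * b), End.mul_apply]
      · refine add_mem (Submodule.mem_sup_right ?_) (Submodule.mem_sup_left (hinv _ ?_ w hw))
        · refine ⟨ρ (b⁻¹ * g) u, hinv _ ?_ u hu, ?_⟩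
          · simp [Subgroup.mul_mem_iff_of_index_two hindex, hg, hb]
          · rw [hb' g, End.mul_apply]
        · simp [Subgroup.mul_mem_iff_of_index_two hindex, hg, hb]
    rcases hirr _ hS with h | h
    · left
      have : U' = ⊥ := eq_bot_iff.2 (h ▸ le_sup_left)
      exact (Submodule.eq_bot_iff U).2 fun x hx ↦
        Subtype.ext ((Submodule.eq_bot_iff _).1 this _ ⟨x, hx, rfl⟩)
    · right
      refine eq_top_iff.2 fun v _ ↦ ?_
      have hv : (v : V) ∈ U' ⊔ U'.map (ρ b) := h ▸ Submodule.mem_top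
      obtain ⟨u, hu, w', ⟨w, hw, hww⟩, huw⟩ := Submodule.mem_sup.1 hv
      have h0 : w' = 0 := by
        refine Submodule.disjoint_def.1 (ha.isCompl_eigenspace hμ).disjoint w' ?_ ?_
        · rw [← add_sub_cancel_left u w', huw]
          exact sub_mem v.2 (hle hu)
        · rw [← hww]
          exact ha.apply_mem_eigenspace_neg hb (hle hw)
      rw [h0, add_zero] at huw
      obtain ⟨x, hx, hxu⟩ := hu
      have : x = v := Subtype.ext (hxu.trans huw)
      exact this ▸ hx

theorem character_eq_add (ha : ρ.IsSplitting a s) [CharZero k] [FiniteDimensional k V] {μ : k}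
    (hμ : μ * μ = s)
    (h : ρ.commutingSubgroup a) :
    ρ.character h = (ρ.eigenSubrepresentation a μ).toRepresentation.character h +
      (ρ.eigenSubrepresentation a (-μ)).toRepresentation.character h := by
  let N : Bool → Submodule k V := fun i ↦ bif i then End.eigenspace (ρ a) μ
    else End.eigenspace (ρ a) (-μ)
  have hN : DirectSum.IsInternal N :=
    (DirectSum.isInternal_submodule_iff_isCompl N (i := true) (j := false) (by decide)
      (by ext i; cases i <;> simp)).2 (ha.isCompl_eigenspace hμ)
  have hf : ∀ i, Set.MapsTo (ρ h) (N i) (N i) := by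
    intro i
    cases i
    · exact fun v hv ↦ apply_mem_eigenspace h.2 hv
    · exact fun v hv ↦ apply_mem_eigenspace h.2 hv
  have := LinearMap.trace_eq_sum_trace_restrict hN hf
  rw [Fintype.sum_bool] at this
  exact this

end IsSplitting

end Splitting

end Representation

namespace Subgroup

variable {G : Type*} [Group G] [Finite G]

theorem ncard_compl_of_index_eq_two {H : Subgroup G} (hH : H.index = 2) :
    ((H : Set G)ᶜ).ncard = Nat.card H := by
  have h1 := Set.ncard_add_ncard_compl (H : Set G)
  have h2 := H.card_mul_index
  have h3 : (H : Set G).ncard = Nat.card H := rfl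
  rw [hH] at h2
  omega

theorem card_le_four_mul_ncard_compl_union {A B : Subgroup G} (hA : A.index = 2)
    (hB : B.index = 2) : Nat.card G ≤ 4 * (((A : Set G) ∪ B)ᶜ).ncard := by
  have h1 := Set.ncard_add_ncard_compl ((A : Set G) ∪ B)
  have h2 := Set.ncard_union_add_ncard_inter (A : Set G) B
  have h3 := A.card_mul_index
  have h4 := B.card_mul_index
  have h5 := (A ⊓ B).card_mul_index
  have h6 : (A ⊓ B).index ≤ 4 := by
    have := index_inf_le (H := A) (K := B)
    rwa [hA, hB] at this
  have h7 : (A : Set G).ncard = Nat.card A := rfl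
  have h8 : (B : Set G).ncard = Nat.card B := rfl
  have h9 : ((A : Set G) ∩ B).ncard = Nat.card (A ⊓ B : Subgroup G) := rfl
  have h10 := Nat.mul_le_mul_left (Nat.card (A ⊓ B : Subgroup G)) h6
  rw [hA] at h3
  rw [hB] at h4
  omega

end Subgroup

namespace Representation

open Module

section Counting

variable {k G V : Type*} [Field k] [Group G] [AddCommGroup V] [Module k V]
  [FiniteDimensional k V] {ρ : Representation k G V} {a : G} {s : k}

/-- In dimension two, everything commuting with a non-scalar is a polynomial in it. -/
theorem IsSplitting.exists_eq_add_smul (ha : ρ.IsSplitting a s) (hd : finrank k V = 2) {h : G}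
    (hh : h ∈ ρ.commutingSubgroup a) : ∃ α β : k, ρ h = α • 1 + β • ρ a := by
  obtain ⟨v, hv⟩ : ∃ v, LinearIndependent k ![v, ρ a v] := by
    by_contra! hv
    obtain ⟨c, hc⟩ := LinearMap.exists_eq_smul_id_of_forall_notLinearIndependent hv
    exact ha.notMem ⟨c, hc⟩
  let e := basisOfLinearIndependentOfCardEqFinrank hv (by simp [hd])
  have he0 : e 0 = v := by simp [e]
  have he1 : e 1 = ρ a v := by simp [e]
  refine ⟨e.repr (ρ h v) 0, e.repr (ρ h v) 1, ?_⟩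
  have h0 : ρ h v = e.repr (ρ h v) 0 • v + e.repr (ρ h v) 1 • ρ a v := by
    conv_lhs => rw [← e.sum_repr (ρ h v), Fin.sum_univ_two, he0, he1]
  refine e.ext fun i ↦ ?_
  fin_cases i
  · simpa [he0] using h0
  · have h1 := LinearMap.congr_fun hh v
    simp only [End.mul_apply] at h1
    simp only [Fin.mk_one, he1, h1, LinearMap.add_apply, LinearMap.smul_apply, End.one_apply]
    conv_lhs => rw [h0, map_add, map_smul, map_smul]

variable [CharZero k] [IsAlgClosed k]

theorem IsSplitting.character_eq_zero_iff (ha : ρ.IsSplitting a s) (hρ : ρ.IsIrreducible)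
    (hd : finrank k V = 2) (g : G) :
    ρ.character g = 0 ↔ g ∉ ρ.commutingSubgroup a ∨ a⁻¹ * g ∈ ρ.scalarSubgroup := by
  have h0 : LinearMap.trace k V (ρ a) = 0 := ha.character_self hρ
  constructor
  · intro hg
    by_cases hgH : g ∈ ρ.commutingSubgroup a
    · right
      obtain ⟨α, β, hαβ⟩ := ha.exists_eq_add_smul hd hgH
      have h1 : α = 0 := by
        simpa [character, hαβ, h0, hd] using hg
      refine ⟨β, ?_⟩
      rw [map_mul, hαβ, h1, zero_smul, zero_add, mul_smul_comm, ← map_mul, inv_mul_cancel, map_one]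
    · exact Or.inl hgH
  · rintro (hg | ⟨c, hc⟩)
    · exact ha.character_eq_zero hg
    · have : ρ g = c • ρ a := by
        rw [← mul_inv_cancel_left a g, map_mul, hc, mul_smul_comm, mul_one]
      rw [character, this, map_smul, h0, smul_zero]

theorem IsSplitting.ncard_character_eq_zero [Finite G] (ha : ρ.IsSplitting a s)
    (hρ : ρ.IsIrreducible) (hd : finrank k V = 2) :
    {g | ρ.character g = 0}.ncard =
      Nat.card (ρ.commutingSubgroup a) + Nat.card ρ.scalarSubgroup := by
  have h1 : {g | ρ.character g = 0} =
      (ρ.commutingSubgroup a : Set G)ᶜ ∪ Set.image (a * ·) (ρ.scalarSubgroup : Set G) := by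
    ext g
    rw [Set.image_mul_left]
    exact ha.character_eq_zero_iff hρ hd g
  rw [h1, Set.ncard_union_eq, Subgroup.ncard_compl_of_index_eq_two (ha.index_commutingSubgroup hρ),
    Set.ncard_image_of_injective _ (mul_right_injective a)]
  · rfl
  · rw [Set.disjoint_compl_left_iff_subset]
    rintro _ ⟨g, ⟨c, hc⟩, rfl⟩
    refine mul_mem (rfl : ρ a * ρ a = ρ a * ρ a) ?_
    rw [mem_commutingSubgroup, hc, smul_mul_assoc, mul_smul_comm, one_mul, mul_one]

theorem IsSplitting.five_mul_card_commutingSubgroup_le [Finite G] (hG : IsPGroup 2 G) (ha : ρ.IsSplitting a s)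
    (hρ : ρ.IsIrreducible) (hd : 2 < finrank k V) :
    5 * Nat.card (ρ.commutingSubgroup a) ≤ 4 * {g | ρ.character g = 0}.ncard := by
  obtain ⟨μ, hμ⟩ := IsAlgClosed.exists_pow_nat_eq s (n := 2) two_pos
  rw [pow_two] at hμ
  have hμ' : -μ * -μ = s := by rw [neg_mul_neg, hμ]
  have hH := hG.to_subgroup (ρ.commutingSubgroup a)
  have hd1 := ha.two_mul_finrank_eigenspace hρ hμ
  have hd2 := ha.two_mul_finrank_eigenspace hρ hμ'
  have hi1 := ha.isIrreducible_eigenSubrepresentation hρ hμ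
  have hi2 := ha.isIrreducible_eigenSubrepresentation hρ hμ'
  obtain ⟨a₁, s₁, h₁⟩ := hi1.exists_isSplitting hH (show 1 < finrank k (End.eigenspace (ρ a) μ) by
    omega)
  obtain ⟨a₂, s₂, h₂⟩ := hi2.exists_isSplitting hH
    (show 1 < finrank k (End.eigenspace (ρ a) (-μ)) by omega)
  have hfin1 : FiniteDimensional k (ρ.eigenSubrepresentation a μ).toSubmodule :=
    inferInstanceAs (FiniteDimensional k (End.eigenspace (ρ a) μ))
  have hfin2 : FiniteDimensional k (ρ.eigenSubrepresentation a (-μ)).toSubmodule :=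
    inferInstanceAs (FiniteDimensional k (End.eigenspace (ρ a) (-μ)))
  obtain ⟨L₁, hL₁, hz₁⟩ : ∃ L : Subgroup (ρ.commutingSubgroup a), L.index = 2 ∧
      ∀ h ∉ L, (ρ.eigenSubrepresentation a μ).toRepresentation.character h = 0 :=
    ⟨_, h₁.index_commutingSubgroup hi1, fun h hh ↦ h₁.character_eq_zero hh⟩
  obtain ⟨L₂, hL₂, hz₂⟩ : ∃ L : Subgroup (ρ.commutingSubgroup a), L.index = 2 ∧
      ∀ h ∉ L, (ρ.eigenSubrepresentation a (-μ)).toRepresentation.character h = 0 :=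
    ⟨_, h₂.index_commutingSubgroup hi2, fun h hh ↦ h₂.character_eq_zero hh⟩
  have hL := Subgroup.card_le_four_mul_ncard_compl_union hL₁ hL₂
  have hsub : (ρ.commutingSubgroup a : Set G)ᶜ ∪
      Set.image Subtype.val ((L₁ : Set (ρ.commutingSubgroup a)) ∪ L₂)ᶜ ⊆
      {g | ρ.character g = 0} := by
    rintro g (hg | ⟨h, hh, rfl⟩)
    · exact ha.character_eq_zero hg
    · simp only [Set.compl_union, Set.mem_inter_iff, Set.mem_compl_iff, SetLike.mem_coe] at hh
      change ρ.character h = 0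
      rw [ha.character_eq_add hμ h, hz₁ h hh.1, hz₂ h hh.2, add_zero]
  have hle := Set.ncard_le_ncard hsub (Set.toFinite _)
  rw [Set.ncard_union_eq, Subgroup.ncard_compl_of_index_eq_two (ha.index_commutingSubgroup hρ),
    Set.ncard_image_of_injective _ Subtype.val_injective] at hle
  · omega
  · rw [Set.disjoint_compl_left_iff_subset]
    rintro _ ⟨h, -, rfl⟩
    exact h.2

end Counting

section Dimension

variable {k G V : Type*} [Field k] [IsAlgClosed k] [Group G] [AddCommGroup V]
  [Module k V] [FiniteDimensional k V] {ρ : Representation k G V}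

/-- **Burnside's theorem**: an irreducible representation over an algebraically closed field maps
the group algebra onto all endomorphisms. -/
theorem IsIrreducible.asAlgebraHom_surjective (hρ : ρ.IsIrreducible) :
    Function.Surjective ρ.asAlgebraHom := by
  intro T
  obtain ⟨hV, hirr⟩ := ρ.isIrreducible_iff_forall_submodule.1 hρ
  let A : Subalgebra k (End k V) := ρ.asAlgebraHom.range
  let ι : G → A := fun g ↦ ⟨ρ g, MonoidAlgebra.single g 1, ρ.asAlgebraHom_single_one g⟩
  have : IsSimpleModule A V := by
    rw [isSimpleModule_iff]
    refine { exists_pair_ne := ⟨⊥, ⊤, bot_ne_top⟩, eq_bot_or_eq_top := fun U ↦ ?_ }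
    refine (hirr (U.restrictScalars k) fun g v hv ↦ U.smul_mem (ι g) hv).imp ?_ ?_ <;>
      simp
  have hscalar : ∀ f : End A V, ∃ c : k, ∀ v : V, f v = c • v := by
    intro f
    obtain ⟨c, hc⟩ := hρ.exists_eq_smul_one (f.restrictScalars k)
      (fun g ↦ LinearMap.ext fun v ↦ (f.map_smul (ι g) v).symm)
    exact ⟨c, fun v ↦ LinearMap.congr_fun hc v⟩
  let F : End (End A V) V :=
    { toFun := T
      map_add' := T.map_add
      map_smul' := fun f v ↦ by
        obtain ⟨c, hc⟩ := hscalar f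
        simp [hc] }
  obtain ⟨t, ht⟩ := Module.Finite.fg_top (R := k) (M := V)
  obtain ⟨⟨_, r, rfl⟩, hr⟩ := jacobson_density (R := A) F t
  refine ⟨r, LinearMap.ext_on ht fun v hv ↦ ?_⟩
  exact (hr v hv).symm

theorem IsIrreducible.finrank_sq_lt [Finite G] (hρ : ρ.IsIrreducible)
    (hZ : Nontrivial (Subgroup.center G)) : finrank k V ^ 2 < Nat.card G := by
  obtain ⟨⟨z, hz⟩, hz1⟩ := exists_ne (1 : Subgroup.center G)
  obtain ⟨c, hc⟩ := hρ.center_le_scalarSubgroup hz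
  have hz1 : z ≠ 1 := fun h ↦ hz1 (Subtype.ext h)
  have hsurj := hρ.asAlgebraHom_surjective
  have hcard : finrank k (MonoidAlgebra k G) = Nat.card G := by
    have := Fintype.ofFinite G
    rw [(MonoidAlgebra.coeffLinearEquiv k).finrank_eq, finrank_finsupp_self,
      Nat.card_eq_fintype_card]
  have hfin : FiniteDimensional k (MonoidAlgebra k G) :=
    FiniteDimensional.of_finrank_pos (by rw [hcard]; exact Nat.card_pos)
  have h1 := LinearMap.finrank_range_add_finrank_ker ρ.asAlgebraHom.toLinearMap
  rw [LinearMap.range_eq_top.2 hsurj, finrank_top, finrank_linearMap, hcard, ← pow_two] at h1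
  have h2 : 0 < finrank k (LinearMap.ker ρ.asAlgebraHom.toLinearMap) := by
    refine finrank_pos_iff_exists_ne_zero.2
      ⟨⟨MonoidAlgebra.single z 1 - MonoidAlgebra.single 1 c, ?_⟩, fun h ↦ ?_⟩
    · simp [asAlgebraHom_single, hc]
    · have := congrArg (fun f : MonoidAlgebra k G ↦ f.coeff z) (Subtype.ext_iff.1 h)
      simp [hz1] at this
  omega

end Dimension

end Representation

namespace FDRep

open Module

universe u v

variable {k : Type u} {G : Type v} [Field k] [Group G]

theorem injective_of_mono {W V : FDRep k G} (f : W ⟶ V) [Mono f] :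
    Function.Injective f.hom.hom.hom := by
  have h1 : Mono ((forget₂ (FGModuleCat k) (ModuleCat k)).map f.hom) := by
    have : Mono f.hom := inferInstanceAs (Mono ((Action.forget (FGModuleCat k) G).map f))
    infer_instance
  exact (ModuleCat.mono_iff_injective _).1 h1

theorem hom_apply_comm {W V : FDRep k G} (f : W ⟶ V) (g : G) (w : W) :
    f.hom.hom.hom (W.ρ g w) = V.ρ g (f.hom.hom.hom w) := by
  have := congrArg (fun φ ↦ φ.hom.hom w) (f.comm g)
  exact this

/-- A finite-dimensional representation is a simple object if and only if it is irreducible. -/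
theorem simple_iff_isIrreducible (V : FDRep k G) :
    Simple V ↔ Representation.IsIrreducible V.ρ := by
  rw [Representation.isIrreducible_iff_forall_submodule]
  constructor
  · intro hV
    constructor
    · by_contra h
      rw [not_nontrivial_iff_subsingleton] at h
      refine id_nonzero V ?_
      ext v
      exact Subsingleton.elim (α := V) _ _
    · intro U hU
      let σ : Representation k G U := Subrepresentation.toRepresentation ⟨U, hU⟩
      let f : FDRep.of σ ⟶ V :=
        ⟨FGModuleCat.ofHom U.subtype, fun g ↦ by ext; rfl⟩
      have hf : Mono f := by
        refine ⟨fun {Z} p q hpq ↦ ?_⟩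
        ext z
        have := congrArg (fun φ ↦ φ.hom.hom.hom z) hpq
        exact this
      by_cases h0 : f = 0
      · left
        refine (Submodule.eq_bot_iff U).2 fun u hu ↦ ?_
        exact congrArg (fun φ ↦ φ.hom.hom.hom (⟨u, hu⟩ : U)) h0
      · right
        have : IsIso f := isIso_of_mono_of_nonzero h0
        refine eq_top_iff.2 fun v _ ↦ ?_
        have := congrArg (fun φ ↦ φ.hom.hom.hom v) (IsIso.inv_hom_id f)
        have h1 : (((inv f).hom.hom.hom v : U) : V) = v := this
        rw [← h1]
        exact Subtype.property _
  · rintro ⟨hV, hirr⟩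
    refine ⟨fun {W} f hf ↦ ⟨fun hiso h0 ↦ ?_, fun h0 ↦ ?_⟩⟩
    · obtain ⟨v, hv⟩ := exists_ne (0 : V)
      apply hv
      have h1 : 𝟙 V = 0 :=
        (IsIso.inv_hom_id f).symm.trans ((congrArg (inv f ≫ ·) h0).trans Limits.comp_zero)
      exact congrArg (fun φ ↦ φ.hom.hom.hom v) h1
    · have hinj := injective_of_mono f
      have hr := hirr (LinearMap.range f.hom.hom.hom) (by
        rintro g _ ⟨w, rfl⟩
        exact ⟨W.ρ g w, hom_apply_comm f g w⟩)
      rcases hr with hr | hr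
      · exfalso
        apply h0
        ext w
        exact (Submodule.eq_bot_iff _).1 hr _ ⟨w, rfl⟩
      · have hbij : Function.Bijective f.hom.hom.hom := ⟨hinj, LinearMap.range_eq_top.1 hr⟩
        let e : W ≃ₗ[k] V := LinearEquiv.ofBijective f.hom.hom.hom hbij
        have : IsIso f.hom := by
          have : f.hom = (e.toFGModuleCatIso).hom := by ext; rfl
          rw [this]
          infer_instance
        exact Action.isIso_of_hom_isIso f

end FDRep

section Isomorphisms

variable {G : Type*} [Group G]

theorem exists_monoidHom_zmod {x : G} {m : ℕ} (hx : x ^ m = 1) :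
    ∃ F : Multiplicative (ZMod m) →* G, ∀ k : ℤ, F (Multiplicative.ofAdd (k : ZMod m)) = x ^ k := by
  let f := ZMod.lift m ⟨zmultiplesHom (Additive G) (Additive.ofMul x), by
    simp only [zmultiplesHom_apply, natCast_zsmul]
    rw [← ofMul_pow, hx, ofMul_one]⟩
  refine ⟨AddMonoidHom.toMultiplicativeLeft f, fun k ↦ ?_⟩
  simp [f]

/-- Every element has the form `x ^ k` or `y * x ^ k`. -/
def IsDicyclicGenerated (x y : G) : Prop := ∀ g, ∃ k : ℤ, g = x ^ k ∨ g = y * x ^ k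

theorem IsDicyclicGenerated.finite_and_card_le {x y : G} (h : IsDicyclicGenerated x y) {m : ℕ}
    (hm : 0 < m) (hx : x ^ m = 1) : Finite G ∧ Nat.card G ≤ 2 * m := by
  have hs : Function.Surjective
      (fun p : Bool × Fin m ↦ (bif p.1 then y else 1) * x ^ (p.2 : ℕ)) := by
    intro g
    obtain ⟨k, hk⟩ := h g
    have hm' : (0 : ℤ) < m := by exact_mod_cast hm
    obtain ⟨j, hj⟩ := Int.eq_ofNat_of_zero_le (Int.emod_nonneg k hm'.ne')
    have hjm : j < m := by have := Int.emod_lt_of_pos k hm'; omega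
    have hxk : x ^ k = x ^ j := by
      rw [← zpow_natCast x j, ← hj, ← zpow_mod_orderOf, ← zpow_mod_orderOf x (k % m),
        Int.emod_emod_of_dvd _ (by exact_mod_cast orderOf_dvd_of_pow_eq_one hx)]
    rcases hk with hk | hk
    · exact ⟨(false, ⟨j, hjm⟩), by simp [hk, hxk]⟩
    · exact ⟨(true, ⟨j, hjm⟩), by simp [hk, hxk]⟩
  refine ⟨Finite.of_surjective _ hs, ?_⟩
  have := Nat.card_le_card_of_surjective _ hs
  simpa using this

theorem IsDicyclicGenerated.of_closure_eq_top {x y : G} (hcl : Subgroup.closure {x, y} = ⊤)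
    (hy : y * y = 1) {r : ℤ} (hxy : y * x * y⁻¹ = x ^ r) : IsDicyclicGenerated x y := by
  have hinv : y⁻¹ = y := inv_eq_of_mul_eq_one_left hy
  have hconj : ∀ k : ℤ, x ^ k * y = y * x ^ (r * k) := by
    intro k
    have h1 : y * x ^ k * y⁻¹ = x ^ (r * k) := by
      rw [← MulAut.conj_apply, map_zpow, MulAut.conj_apply, hxy, zpow_mul]
    rw [← h1, hinv, ← mul_assoc, ← mul_assoc, hy, one_mul]
  have hX : ∀ (j : ℤ) (u : G), (∃ k : ℤ, u = x ^ k ∨ u = y * x ^ k) →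
      ∃ k : ℤ, x ^ j * u = x ^ k ∨ x ^ j * u = y * x ^ k := by
    rintro j _ ⟨k, rfl | rfl⟩
    · exact ⟨j + k, Or.inl (zpow_add x j k).symm⟩
    · exact ⟨r * j + k, Or.inr (by rw [← mul_assoc, hconj, mul_assoc, zpow_add])⟩
  have hY : ∀ u : G, (∃ k : ℤ, u = x ^ k ∨ u = y * x ^ k) →
      ∃ k : ℤ, y * u = x ^ k ∨ y * u = y * x ^ k := by
    rintro _ ⟨k, rfl | rfl⟩
    · exact ⟨k, Or.inr rfl⟩
    · exact ⟨k, Or.inl (by rw [← mul_assoc, hy, one_mul])⟩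
  intro g
  have hg : g ∈ Subgroup.closure {x, y} := hcl ▸ Subgroup.mem_top g
  induction hg using Subgroup.closure_induction_left with
  | one => exact ⟨0, Or.inl (zpow_zero _).symm⟩
  | mul_left u hu v hv ih =>
    rcases hu with rfl | rfl
    · simpa using hX 1 v ih
    · exact hY v ih
  | inv_mul_cancel u hu v hv ih =>
    rcases hu with rfl | rfl
    · simpa using hX (-1) v ih
    · rw [hinv]
      exact hY v ih

theorem nonempty_mulEquiv_of_surjective {K : Type*} [Group K] [Finite K] (f : K →* G)
    (hf : Function.Surjective f) (hc : Nat.card K ≤ Nat.card G) : Nonempty (G ≃* K) :=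
  ⟨(MulEquiv.ofBijective f ((Nat.bijective_iff_surjective_and_card f).2
    ⟨hf, le_antisymm hc (Nat.card_le_card_of_surjective f hf)⟩)).symm⟩

theorem conj_zpow_eq_zpow_neg {x y : G} (hxy : y * x * y⁻¹ = x⁻¹) (k : ℤ) :
    x ^ k * y = y * x ^ (-k) := by
  have h1 : y * x ^ (-k) * y⁻¹ = x ^ k := by
    rw [← MulAut.conj_apply, map_zpow, MulAut.conj_apply, hxy, inv_zpow, zpow_neg, inv_inv]
  rw [← h1, inv_mul_cancel_right]

theorem nonempty_mulEquiv_dihedralGroup {x y : G} {m : ℕ} (hm : 0 < m) (hc : Nat.card G = 2 * m)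
    (hgen : IsDicyclicGenerated x y) (hx : x ^ m = 1) (hy : y * y = 1)
    (hxy : y * x * y⁻¹ = x⁻¹) : Nonempty (G ≃* DihedralGroup m) := by
  obtain ⟨F, hF⟩ := exists_monoidHom_zmod hx
  have : NeZero m := ⟨hm.ne'⟩
  have hadd : ∀ i j : ZMod m, F (.ofAdd (i + j)) = F (.ofAdd i) * F (.ofAdd j) := fun i j ↦ by
    rw [ofAdd_add, map_mul]
  have hconj : ∀ i : ZMod m, F (.ofAdd i) * y = y * F (.ofAdd (-i)) := by
    intro i
    obtain ⟨k, rfl⟩ := ZMod.intCast_surjective i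
    rw [← Int.cast_neg, hF, hF, conj_zpow_eq_zpow_neg hxy]
  let φ : DihedralGroup m → G
    | .r i => F (.ofAdd i)
    | .sr i => y * F (.ofAdd i)
  let f : DihedralGroup m →* G := MonoidHom.mk' φ (by
    rintro (i | i) (j | j)
    · exact hadd i j
    · change y * F (.ofAdd (j - i)) = F (.ofAdd i) * (y * F (.ofAdd j))
      rw [← mul_assoc, hconj, mul_assoc, ← hadd, neg_add_eq_sub]
    · change y * F (.ofAdd (i + j)) = y * F (.ofAdd i) * F (.ofAdd j)
      rw [hadd, mul_assoc]
    · change F (.ofAdd (j - i)) = y * F (.ofAdd i) * (y * F (.ofAdd j))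
      rw [mul_assoc, ← mul_assoc (F _) y, hconj, ← mul_assoc, ← mul_assoc, hy, one_mul, ← hadd,
        neg_add_eq_sub])
  refine nonempty_mulEquiv_of_surjective f (fun g ↦ ?_) (by rw [DihedralGroup.nat_card, hc])
  obtain ⟨k, rfl | rfl⟩ := hgen g
  · exact ⟨.r k, hF k⟩
  · exact ⟨.sr k, congrArg (y * ·) (hF k)⟩

theorem nonempty_mulEquiv_quaternionGroup {x y : G} {m : ℕ} (hm : 0 < m) (hc : Nat.card G = 4 * m)
    (hgen : IsDicyclicGenerated x y) (hx : x ^ (2 * m) = 1) (hy : y * y = x ^ m)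
    (hxy : y * x * y⁻¹ = x⁻¹) : Nonempty (G ≃* QuaternionGroup m) := by
  obtain ⟨F, hF⟩ := exists_monoidHom_zmod hx
  have : NeZero m := ⟨hm.ne'⟩
  have hadd : ∀ i j : ZMod (2 * m), F (.ofAdd (i + j)) = F (.ofAdd i) * F (.ofAdd j) :=
    fun i j ↦ by rw [ofAdd_add, map_mul]
  have hconj : ∀ i : ZMod (2 * m), F (.ofAdd i) * y = y * F (.ofAdd (-i)) := by
    intro i
    obtain ⟨k, rfl⟩ := ZMod.intCast_surjective i
    rw [← Int.cast_neg, hF, hF, conj_zpow_eq_zpow_neg hxy]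
  have hyy : y * y = F (.ofAdd (m : ZMod (2 * m))) := by
    rw [hy, ← zpow_natCast, ← hF, Int.cast_natCast]
  let φ : QuaternionGroup m → G
    | .a i => F (.ofAdd i)
    | .xa i => y * F (.ofAdd i)
  let f : QuaternionGroup m →* G := MonoidHom.mk' φ (by
    rintro (i | i) (j | j)
    · exact hadd i j
    · change y * F (.ofAdd (j - i)) = F (.ofAdd i) * (y * F (.ofAdd j))
      rw [← mul_assoc, hconj, mul_assoc, ← hadd, neg_add_eq_sub]
    · change y * F (.ofAdd (i + j)) = y * F (.ofAdd i) * F (.ofAdd j)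
      rw [hadd, mul_assoc]
    · change F (.ofAdd ((m : ZMod (2 * m)) + j - i)) = y * F (.ofAdd i) * (y * F (.ofAdd j))
      rw [mul_assoc, ← mul_assoc (F _) y, hconj, ← mul_assoc, ← mul_assoc, hyy, ← hadd, ← hadd]
      congr 2
      ring)
  refine nonempty_mulEquiv_of_surjective f (fun g ↦ ?_)
    (by rw [Nat.card_eq_fintype_card, QuaternionGroup.card, hc])
  obtain ⟨k, rfl | rfl⟩ := hgen g
  · exact ⟨.a k, hF k⟩
  · exact ⟨.xa k, congrArg (y * ·) (hF k)⟩

end Isomorphisms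

namespace SemidihedralGroup

variable {n : ℕ}

/-- The generator of order `2 ^ (n - 1)`. -/
def rotation (n : ℕ) : SemidihedralGroup n := PresentedGroup.of (rels := semidihedralRels n) 0

/-- The generator of order two. -/
def reflection (n : ℕ) : SemidihedralGroup n := PresentedGroup.of (rels := semidihedralRels n) 1

theorem rotation_pow : rotation n ^ 2 ^ (n - 1) = 1 :=
  PresentedGroup.one_of_mem (rels := semidihedralRels n) (Or.inl rfl)

theorem reflection_mul_self : reflection n * reflection n = 1 := by
  rw [← pow_two]
  exact PresentedGroup.one_of_mem (rels := semidihedralRels n) (Or.inr (Or.inl rfl))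

theorem conj_rotation :
    reflection n * rotation n * (reflection n)⁻¹ = rotation n ^ (2 ^ (n - 2) - 1) :=
  mul_inv_eq_one.1
    (PresentedGroup.one_of_mem (rels := semidihedralRels n) (Or.inr (Or.inr rfl)))

theorem closure_rotation_reflection :
    Subgroup.closure {rotation n, reflection n} = (⊤ : Subgroup (SemidihedralGroup n)) := by
  rw [← top_le_iff]
  refine (PresentedGroup.closure_range_of (semidihedralRels n)).ge.trans ?_
  refine (Subgroup.closure_le _).2 ?_
  rintro _ ⟨i, rfl⟩
  refine Subgroup.subset_closure ?_
  fin_cases i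
  · exact Or.inl rfl
  · exact Or.inr rfl

theorem isDicyclicGenerated : IsDicyclicGenerated (rotation n) (reflection n) :=
  .of_closure_eq_top closure_rotation_reflection reflection_mul_self
    (r := ((2 ^ (n - 2) - 1 : ℕ) : ℤ)) (by rw [conj_rotation, zpow_natCast])

theorem nonempty_mulEquiv {G : Type*} [Group G] {x y : G} (hn : 1 ≤ n)
    (hc : Nat.card G = 2 ^ n) (hgen : IsDicyclicGenerated x y) (hx : x ^ 2 ^ (n - 1) = 1)
    (hy : y * y = 1) (hxy : y * x * y⁻¹ = x ^ (2 ^ (n - 2) - 1)) :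
    Nonempty (G ≃* SemidihedralGroup n) := by
  let f : SemidihedralGroup n →* G :=
    PresentedGroup.toGroup (rels := semidihedralRels n) (f := ![x, y]) (by
      rintro r (rfl | rfl | rfl)
      · simpa using hx
      · simpa [pow_two] using hy
      · simpa [mul_inv_eq_one] using hxy)
  have hfx : f (rotation n) = x := PresentedGroup.toGroup.of _
  have hfy : f (reflection n) = y := PresentedGroup.toGroup.of _
  obtain ⟨hfin, hle⟩ := (isDicyclicGenerated (n := n)).finite_and_card_le (by positivity)
    rotation_pow
  refine nonempty_mulEquiv_of_surjective f (fun g ↦ ?_) ?_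
  · obtain ⟨k, rfl | rfl⟩ := hgen g
    · exact ⟨rotation n ^ k, by rw [map_zpow, hfx]⟩
    · exact ⟨reflection n * rotation n ^ k, by rw [map_mul, map_zpow, hfx, hfy]⟩
  · rwa [hc, ← mul_pow_sub_one (by omega : n ≠ 0) 2]

end SemidihedralGroup

/-- Generators of a dihedral, generalized quaternion or semidihedral group of order `2 ^ n`:
`x` generates a cyclic subgroup of order `2 ^ (n - 1)` not containing `y`, and `y` inverts `x`, up to
the involution in `⟨x⟩` when `4 ≤ n`. -/
structure IsMaximalClassPair {G : Type*} [Group G] (n : ℕ) (x y : G) : Prop where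
  orderOf_eq : orderOf x = 2 ^ (n - 1)
  notMem : y ∉ Subgroup.zpowers x
  conj : y * x * y⁻¹ = x⁻¹ ∨ (4 ≤ n ∧ y * x * y⁻¹ = x⁻¹ * x ^ 2 ^ (n - 2))

theorem inv_mul_pow_two_pow {G : Type*} [Group G] (x : G) (k : ℕ) :
    x⁻¹ * x ^ 2 ^ k = x ^ (2 ^ k - 1) := by
  rw [← mul_pow_sub_one (Nat.two_pow_pos k).ne' x, inv_mul_cancel_left]

namespace IsMaximalClassPair

variable {G : Type*} [Group G] {n : ℕ} {x y : G}

theorem index_zpowers (h : IsMaximalClassPair n x y) (hn : 1 ≤ n) (hc : Nat.card G = 2 ^ n) :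
    (Subgroup.zpowers x).index = 2 := by
  have h1 := (Subgroup.zpowers x).card_mul_index
  rw [Nat.card_zpowers, h.orderOf_eq, hc, ← mul_pow_sub_one (by omega : n ≠ 0) 2, mul_comm] at h1
  exact Nat.eq_of_mul_eq_mul_right (by positivity) h1

theorem isDicyclicGenerated (h : IsMaximalClassPair n x y) (hn : 1 ≤ n)
    (hc : Nat.card G = 2 ^ n) : IsDicyclicGenerated x y := by
  intro g
  by_cases hg : g ∈ Subgroup.zpowers x
  · obtain ⟨k, hk⟩ := hg
    exact ⟨k, Or.inl hk.symm⟩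
  · have : y⁻¹ * g ∈ Subgroup.zpowers x := by
      simp [Subgroup.mul_mem_iff_of_index_two (h.index_zpowers hn hc), hg, h.notMem]
    obtain ⟨k, hk⟩ := this
    exact ⟨k, Or.inr (by simp only at hk; rw [hk, mul_inv_cancel_left])⟩

theorem pow_ne_one (h : IsMaximalClassPair n x y) (hn : 2 ≤ n) : x ^ 2 ^ (n - 2) ≠ 1 := by
  intro h1
  have h2 := orderOf_dvd_of_pow_eq_one h1
  rw [h.orderOf_eq, Nat.pow_dvd_pow_iff_le_right (by norm_num)] at h2
  omega

theorem pow_mul_self (h : IsMaximalClassPair n x y) (hn : 2 ≤ n) :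
    x ^ 2 ^ (n - 2) * x ^ 2 ^ (n - 2) = 1 := by
  rw [← pow_add, ← two_mul, ← pow_succ', show n - 2 + 1 = n - 1 by omega, ← h.orderOf_eq,
    pow_orderOf_eq_one]

/-- A power of `x` commuting with `y` lies in the subgroup of order two. -/
theorem zpow_eq_of_conj_eq (h : IsMaximalClassPair n x y) (hn : 3 ≤ n) {k : ℤ}
    (hk : y * x ^ k * y⁻¹ = x ^ k) : x ^ k = 1 ∨ x ^ k = x ^ 2 ^ (n - 2) := by
  have hz := h.pow_mul_self (by omega)
  obtain ⟨m, rfl⟩ := Nat.exists_eq_add_of_le' hn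
  have ho : ∀ j : ℤ, x ^ j = 1 ↔ (4 * 2 ^ m : ℤ) ∣ j := by
    intro j
    rw [← orderOf_dvd_iff_zpow_eq_one, h.orderOf_eq]
    have h4 : ((2 ^ (m + 3 - 1) : ℕ) : ℤ) = 4 * 2 ^ m := by
      rw [show m + 3 - 1 = m + 2 by omega]
      push_cast
      ring
    rw [h4]
  have hx2 : x ^ (2 * k) = 1 := by
    rw [← MulAut.conj_apply, map_zpow, MulAut.conj_apply] at hk
    rcases h.conj with h1 | ⟨h4, h1⟩
    · rw [h1, inv_zpow, inv_eq_iff_mul_eq_one, ← zpow_add, ← two_mul] at hk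
      exact hk
    · have hcomm : Commute x⁻¹ (x ^ 2 ^ (m + 3 - 2)) := (Commute.refl x).inv_left.pow_right _
      rw [h1, hcomm.mul_zpow, inv_zpow, inv_mul_eq_iff_eq_mul, ← zpow_add, ← two_mul] at hk
      have h2 : x ^ (4 * k) = 1 := by
        rw [show 4 * k = 2 * k + 2 * k by ring, zpow_add, ← hk,
          ← (Commute.refl _).mul_zpow, hz, one_zpow]
      rw [ho] at h2
      have hk2 : (2 : ℤ) ∣ k := by
        have h3 : (2 ^ m : ℤ) ∣ k := (mul_dvd_mul_iff_left (by norm_num)).1 h2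
        exact (dvd_pow_self 2 (by omega)).trans h3
      obtain ⟨j, rfl⟩ := hk2
      rw [← hk, zpow_mul, zpow_two, hz, one_zpow]
  rw [ho] at hx2
  have h3 : (2 * 2 ^ m : ℤ) ∣ k := by
    rw [show (4 * 2 ^ m : ℤ) = 2 * (2 * 2 ^ m) by ring] at hx2
    exact (mul_dvd_mul_iff_left (by norm_num)).1 hx2
  obtain ⟨j, rfl⟩ := h3
  have hz' : x ^ (2 * 2 ^ m : ℤ) = x ^ 2 ^ (m + 3 - 2) := by
    rw [show m + 3 - 2 = m + 1 by omega, ← zpow_natCast]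
    push_cast
    rw [pow_succ']
  rw [zpow_mul, hz']
  obtain ⟨i, rfl | rfl⟩ := Int.even_or_odd' j
  · left; rw [zpow_mul, zpow_two, hz, one_zpow]
  · right; rw [zpow_add, zpow_mul, zpow_two, hz, one_zpow, one_mul, zpow_one]

/-- A group of order `2 ^ n` with such generators is dihedral, generalized quaternion or
semidihedral. -/
theorem classification (h : IsMaximalClassPair n x y) (hn : 3 ≤ n) (hc : Nat.card G = 2 ^ n) :
    Nonempty (G ≃* DihedralGroup (2 ^ (n - 1))) ∨
       Nonempty (G ≃* QuaternionGroup (2 ^ (n - 2))) ∨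
       (4 ≤ n ∧ Nonempty (G ≃* SemidihedralGroup n)) := by
  have hgen := h.isDicyclicGenerated (by omega) hc
  have hz := h.pow_mul_self (by omega)
  have hx : x ^ 2 ^ (n - 1) = 1 := by rw [← h.orderOf_eq, pow_orderOf_eq_one]
  have hc2 : Nat.card G = 2 * 2 ^ (n - 1) := by rw [hc, mul_pow_sub_one (by omega)]
  have hx' : x ^ (2 * 2 ^ (n - 2)) = 1 := by rwa [two_mul, pow_add]
  have hc4 : Nat.card G = 4 * 2 ^ (n - 2) := by
    rw [hc, show (4 : ℕ) = 2 ^ 2 by norm_num, ← pow_add]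
    congr 1
    omega
  have hyy : y * y = 1 ∨ y * y = x ^ 2 ^ (n - 2) := by
    obtain ⟨k, hk⟩ := Subgroup.mul_self_mem_of_index_two (h.index_zpowers (by omega) hc) y
    simp only at hk
    rw [← hk]
    exact h.zpow_eq_of_conj_eq hn (by rw [hk, mul_assoc, mul_inv_cancel_right])
  rcases h.conj with h1 | ⟨h4, h1⟩
  · rcases hyy with h2 | h2
    · exact Or.inl (nonempty_mulEquiv_dihedralGroup (by positivity) hc2 hgen hx h2 h1)
    · exact Or.inr (Or.inl
        (nonempty_mulEquiv_quaternionGroup (by positivity) hc4 hgen hx' h2 h1))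
  · refine Or.inr (Or.inr ⟨h4, ?_⟩)
    rcases hyy with h2 | h2
    · exact SemidihedralGroup.nonempty_mulEquiv (by omega) hc hgen hx h2
        (by rw [h1, inv_mul_pow_two_pow])
    · have hconj : x * y * x * (x * y)⁻¹ = x⁻¹ * x ^ 2 ^ (n - 2) := by
        rw [show x * y * x * (x * y)⁻¹ = x * (y * x * y⁻¹) * x⁻¹ by group, h1,
          mul_inv_cancel_left, ((Commute.refl x).inv_left.pow_right _).eq]
      have h' : IsMaximalClassPair n x (x * y) := by
        refine ⟨h.orderOf_eq, ?_, Or.inr ⟨h4, hconj⟩⟩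
        rw [Subgroup.mul_mem_cancel_left _ (Subgroup.mem_zpowers x)]
        exact h.notMem
      refine SemidihedralGroup.nonempty_mulEquiv (by omega) hc
        (h'.isDicyclicGenerated (by omega) hc) hx ?_ ?_
      · rw [show x * y * (x * y) = x * (y * x * y⁻¹) * (y * y) by group, h1, h2,
          mul_inv_cancel_left, hz]
      · rw [← inv_mul_pow_two_pow]
        exact hconj

theorem of_isDicyclicGenerated (hn : 3 ≤ n) (hc : Nat.card G = 2 ^ n)
    (hgen : IsDicyclicGenerated x y) (hx : x ^ 2 ^ (n - 1) = 1)
    (hxy : y * x * y⁻¹ = x⁻¹ ∨ (4 ≤ n ∧ y * x * y⁻¹ = x⁻¹ * x ^ 2 ^ (n - 2))) :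
    IsMaximalClassPair n x y := by
  have ho : orderOf x = 2 ^ (n - 1) := by
    refine Nat.dvd_antisymm (orderOf_dvd_of_pow_eq_one hx) ?_
    obtain ⟨j, hj, hjo⟩ := (Nat.dvd_prime_pow Nat.prime_two).1 (orderOf_dvd_of_pow_eq_one hx)
    obtain ⟨-, hle⟩ := hgen.finite_and_card_le (orderOf_pos_iff.2
      (isOfFinOrder_iff_pow_eq_one.2 ⟨_, by positivity, hx⟩)) (pow_orderOf_eq_one x)
    rw [hc, hjo, ← pow_succ', Nat.pow_le_pow_iff_right (by norm_num)] at hle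
    rw [hjo, Nat.pow_dvd_pow_iff_le_right (by norm_num)]
    omega
  refine ⟨ho, fun hy ↦ ?_, hxy⟩
  have htop : Subgroup.zpowers x = ⊤ := by
    refine (Subgroup.eq_top_iff' _).2 fun g ↦ ?_
    obtain ⟨k, rfl | rfl⟩ := hgen g
    · exact Subgroup.zpow_mem_zpowers x k
    · exact mul_mem hy (Subgroup.zpow_mem_zpowers x k)
  have h1 := Nat.card_zpowers x
  rw [htop, Subgroup.card_top, hc, ho] at h1
  have := Nat.pow_right_injective le_rfl h1
  omega

theorem map (h : IsMaximalClassPair n x y) {K : Type*} [Group K] (e : G ≃* K) :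
    IsMaximalClassPair n (e x) (e y) := by
  refine ⟨by rw [e.orderOf_eq, h.orderOf_eq], ?_, ?_⟩
  · rintro ⟨k, hk⟩
    simp only [← map_zpow] at hk
    exact h.notMem ⟨k, e.injective hk⟩
  · refine h.conj.imp (fun h1 ↦ ?_) (fun h1 ↦ ⟨h1.1, ?_⟩)
    · simp only [← map_mul, ← map_inv, h1]
    · simp only [← map_mul, ← map_inv, ← map_pow, h1.2]

theorem exists_of_mulEquiv (hn : 3 ≤ n) (hc : Nat.card G = 2 ^ n)
    (h : Nonempty (G ≃* DihedralGroup (2 ^ (n - 1))) ∨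
       Nonempty (G ≃* QuaternionGroup (2 ^ (n - 2))) ∨
       (4 ≤ n ∧ Nonempty (G ≃* SemidihedralGroup n))) :
    ∃ x y : G, IsMaximalClassPair n x y := by
  rcases h with ⟨⟨e⟩⟩ | ⟨⟨e⟩⟩ | ⟨h4, ⟨e⟩⟩
  · rw [Nat.card_congr e.toEquiv] at hc
    refine ⟨_, _, (of_isDicyclicGenerated (x := DihedralGroup.r 1) (y := DihedralGroup.sr 0) hn hc
      ?_ DihedralGroup.r_one_pow_n (Or.inl ?_)).map e.symm⟩
    · rintro (i | i) <;> obtain ⟨k, rfl⟩ := ZMod.intCast_surjective i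
      · exact ⟨k, Or.inl (by simp)⟩
      · exact ⟨k, Or.inr (by simp)⟩
    · simp
  · rw [Nat.card_congr e.toEquiv] at hc
    refine ⟨_, _, (of_isDicyclicGenerated (x := QuaternionGroup.a 1) (y := QuaternionGroup.xa 0)
      hn hc ?_ ?_ (Or.inl ?_)).map e.symm⟩
    · rintro (i | i) <;> obtain ⟨k, rfl⟩ := ZMod.natCast_zmod_surjective i
      · exact ⟨k, Or.inl (by simp)⟩
      · exact ⟨k, Or.inr (by simp)⟩
    · rw [show 2 ^ (n - 1) = 2 * 2 ^ (n - 2) by rw [← pow_succ']; congr 1; omega]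
      exact QuaternionGroup.a_one_pow_n
    · rw [mul_inv_eq_iff_eq_mul, eq_inv_mul_iff_mul_eq]
      simp
  · rw [Nat.card_congr e.toEquiv] at hc
    refine ⟨_, _, (of_isDicyclicGenerated hn hc SemidihedralGroup.isDicyclicGenerated
      SemidihedralGroup.rotation_pow (Or.inr ⟨h4, ?_⟩)).map e.symm⟩
    rw [SemidihedralGroup.conj_rotation, inv_mul_pow_two_pow]

end IsMaximalClassPair

/-- Recognition of generators from an element `h` of a subgroup of index two inverted by an outer
element `b` up to a central involution `z`. -/
theorem IsMaximalClassPair.exists_of_conj {G : Type*} [Group G] {n : ℕ} (hn : 3 ≤ n)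
    {H : Subgroup G} (hH : H.index = 2) {z : G} (hzc : ∀ g, g * z = z * g) (hzz : z * z = 1)
    (hz1 : z ≠ 1) {h b : G} (hh : h ∈ H) (hb : b ∉ H)
    (hgen : ∀ g ∈ H, ∃ k : ℤ, g = h ^ k ∨ g = h ^ k * z)
    (hconj : b * h * b⁻¹ = h⁻¹ ∨ b * h * b⁻¹ = h⁻¹ * z)
    (hq : b * h ^ 2 ^ (n - 3) * b⁻¹ = h ^ 2 ^ (n - 3) * z) :
    ∃ x y : G, IsMaximalClassPair n x y := by
  have hzinv : z⁻¹ = z := inv_eq_of_mul_eq_one_left hzz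
  by_cases hA : h ^ 2 ^ (n - 2) = z
  · refine ⟨h, b, ?_, fun hb' ↦ hb ((Subgroup.zpowers_le.2 hh) hb'), ?_⟩
    · rw [show n - 1 = n - 2 + 1 by omega]
      refine orderOf_eq_prime_pow (by rwa [hA]) ?_
      rw [pow_succ, pow_mul, hA, pow_two, hzz]
    · rw [hA]
      refine hconj.imp id fun h1 ↦ ⟨?_, h1⟩
      by_contra h4
      obtain rfl : n = 3 := by omega
      simp only [Nat.sub_self, pow_zero, pow_one] at hq
      rw [h1, mul_left_inj] at hq
      refine hz1 ?_
      rw [← hA, show 2 ^ (3 - 2) = 2 by norm_num, pow_two]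
      nth_rewrite 1 [← hq]
      exact inv_mul_cancel h
  · have h3 : n = 3 := by
      by_contra h3
      refine hA ?_
      have h1 : b * h ^ 2 ^ (n - 3) * b⁻¹ = (h ^ 2 ^ (n - 3))⁻¹ := by
        rw [← MulAut.conj_apply, map_pow, MulAut.conj_apply, ← inv_pow]
        rcases hconj with h1 | h1
        · rw [h1]
        · have : Commute h⁻¹ z := hzc _
          rw [h1, this.mul_pow]
          obtain ⟨m, hm⟩ : ∃ m, 2 ^ (n - 3) = 2 * m := dvd_pow_self 2 (by omega)
          rw [hm, pow_mul z, pow_two, hzz, one_pow, mul_one]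
      rw [hq, eq_inv_iff_mul_eq_one, mul_assoc, ← hzc, ← mul_assoc, mul_eq_one_iff_eq_inv,
        hzinv] at h1
      rw [← h1, ← pow_add, ← two_mul, ← pow_succ', show n - 3 + 1 = n - 2 by omega]
    subst h3
    simp only [Nat.sub_self, pow_zero, pow_one] at hq
    replace hconj : b * h * b⁻¹ = h⁻¹ * z := by
      refine hconj.resolve_left fun h1 ↦ hA ?_
      rw [hq, eq_inv_iff_mul_eq_one, mul_assoc, ← hzc, ← mul_assoc, mul_eq_one_iff_eq_inv,
        hzinv] at h1
      rw [show 2 ^ (3 - 2) = 2 by norm_num, pow_two, h1]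
    have hhh : h * h = 1 := by
      rw [hconj, mul_left_inj] at hq
      nth_rewrite 1 [← hq]
      exact inv_mul_cancel h
    have hhinv : h⁻¹ = h := inv_eq_of_mul_eq_one_left hhh
    have hbh : b * h = h * z * b := by rw [← hq, inv_mul_cancel_right]
    have hhz : h * z ≠ h := fun e ↦ hz1 (mul_eq_left.1 e)
    have key : ∀ x : G, x * x = z → x * h * x⁻¹ = h * z → ∃ x y : G, IsMaximalClassPair 3 x y := by
      intro x hx hxh
      refine ⟨x, h, ?_, ?_, Or.inl ?_⟩
      · refine orderOf_eq_prime_pow (p := 2) (n := 1) ?_ ?_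
        · rwa [pow_one, pow_two, hx]
        · rw [show 2 ^ (1 + 1) = 2 * 2 by norm_num, pow_mul, pow_two x, hx, pow_two, hzz]
      · rintro ⟨k, hk⟩
        simp only at hk
        have hc : x * h * x⁻¹ = h := by
          rw [← hk, ((Commute.refl x).zpow_right k).eq, mul_inv_cancel_right]
        exact hhz (hxh.symm.trans hc)
      · have h1 : x * h = h * z * x := by rw [← hxh, inv_mul_cancel_right]
        rw [eq_inv_iff_mul_eq_one, hhinv, mul_assoc h x h, h1, mul_assoc h z x, ← mul_assoc,
          ← mul_assoc, hhh, one_mul, mul_assoc, hx, hzz]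
    have hbb : b * b = 1 ∨ b * b = z := by
      have hpow : ∀ k : ℤ, h ^ k = 1 ∨ h ^ k = h := by
        intro k
        obtain ⟨i, rfl | rfl⟩ := Int.even_or_odd' k
        · left; rw [zpow_mul, zpow_two, hhh, one_zpow]
        · right; rw [zpow_add, zpow_mul, zpow_two, hhh, one_zpow, one_mul, zpow_one]
      have hcomm : b * (b * b) * b⁻¹ = b * b := by group
      obtain ⟨k, hk | hk⟩ := hgen _ (Subgroup.mul_self_mem_of_index_two hH b) <;>
        rcases hpow k with h1 | h1
      · left; rw [hk, h1]
      · rw [hk, h1, hq] at hcomm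
        exact absurd hcomm hhz
      · right; rw [hk, h1, one_mul]
      · rw [hk, h1, ← mul_assoc, hbh, mul_assoc (h * z), hzc b, ← mul_assoc, mul_assoc h z z, hzz,
          mul_one, mul_inv_cancel_right] at hcomm
        exact absurd hcomm.symm hhz
    rcases hbb with h1 | h1
    · refine key (b * h) ?_ ?_
      · rw [← mul_assoc, hbh, mul_assoc (h * z), h1, mul_one, mul_assoc, ← hzc, ← mul_assoc, hhh,
          one_mul]
      · rw [mul_inv_rev, ← mul_assoc, mul_inv_cancel_right, hq]
    · exact key b h1 hq

namespace Representation

open Module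

theorem neg_one_ne_one_of_nontrivial {k V : Type*} [Field k] [CharZero k] [AddCommGroup V]
    [Module k V] [Nontrivial V] : (-1 : End k V) ≠ 1 := by
  obtain ⟨v, hv⟩ := exists_ne (0 : V)
  intro h
  have h1 : (2 : k) • v = 0 := by
    rw [two_smul]
    nth_rewrite 1 [← End.one_apply (R := k) v]
    rw [← h, LinearMap.neg_apply, End.one_apply, neg_add_cancel]
  exact hv ((smul_eq_zero.1 h1).resolve_left two_ne_zero)

theorem exists_monoidHom_of_eigenvector {k G V : Type*} [Field k] [Group G] [AddCommGroup V]
    [Module k V] (ρ : Representation k G V) {v : V} (hv : v ≠ 0)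
    (h : ∀ g, ∃ c : k, ρ g v = c • v) : ∃ ψ : G →* k, ∀ g, ρ g v = ψ g • v := by
  choose c hc using h
  refine ⟨⟨⟨c, ?_⟩, ?_⟩, hc⟩
  · refine smul_left_injective k hv ?_
    simp only [← hc, map_one, End.one_apply, one_smul]
  · intro g g'
    refine smul_left_injective k hv ?_
    simp only [← hc, map_mul, End.mul_apply]
    rw [hc g', map_smul, hc g, smul_smul, mul_comm]

variable {k G V : Type*} [Field k] [CharZero k] [IsAlgClosed k] [Group G] [AddCommGroup V]
  [Module k V] [FiniteDimensional k V] {ρ : Representation k G V} {a : G} {s : k}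

/-- In dimension two, the elements commuting with the splitting element form a cyclic group modulo
scalars, embedded in the multiplicative group of the field by the ratio of the two eigenvalues. -/
theorem IsSplitting.exists_eigenvalueRatio (ha : ρ.IsSplitting a s) (hρ : ρ.IsIrreducible)
    (hd : finrank k V = 2) :
    ∃ r : ρ.commutingSubgroup a →* kˣ, (∀ g, r g = 1 ↔ (g : G) ∈ ρ.scalarSubgroup) ∧
      ∀ h : ρ.commutingSubgroup a, (h : G) = a → r h = -1 := by
  obtain ⟨μ, hμ⟩ := IsAlgClosed.exists_pow_nat_eq s (n := 2) two_pos
  rw [pow_two] at hμ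
  have hμ0 : μ ≠ 0 := by rintro rfl; exact ha.ne_zero (by rw [← hμ, mul_zero])
  have hμ' : -μ * -μ = s := by rw [neg_mul_neg, hμ]
  have hex : ∀ ν : k, ν * ν = s → ∃ v : V, v ≠ 0 ∧ ρ a v = ν • v := by
    intro ν hν
    have h1 := ha.two_mul_finrank_eigenspace hρ hν
    obtain ⟨⟨v, hv⟩, hv0⟩ := finrank_pos_iff_exists_ne_zero.1
      (show 0 < finrank k (End.eigenspace (ρ a) ν) by omega)
    exact ⟨v, fun h ↦ hv0 (Subtype.ext h), End.mem_eigenspace_iff.1 hv⟩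
  have hψ : ∀ ν : k, ν * ν = s → ∃ ψ : ρ.commutingSubgroup a →* k,
      ∀ (h : ρ.commutingSubgroup a) (α β : k), ρ h = α • 1 + β • ρ a → ψ h = α + β * ν := by
    intro ν hν
    obtain ⟨v, hv0, hv⟩ := hex ν hν
    have hval : ∀ (h : ρ.commutingSubgroup a) (α β : k), ρ h = α • 1 + β • ρ a →
        ρ h v = (α + β * ν) • v := by
      intro h α β e
      rw [e, LinearMap.add_apply, LinearMap.smul_apply, LinearMap.smul_apply, hv, End.one_apply,
        smul_smul, add_smul]
    obtain ⟨ψ, hψ⟩ := exists_monoidHom_of_eigenvector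
      (ρ.comp (ρ.commutingSubgroup a).subtype) hv0 (fun h ↦ by
        obtain ⟨α, β, e⟩ := ha.exists_eq_add_smul hd h.2
        exact ⟨_, hval h α β e⟩)
    refine ⟨ψ, fun h α β e ↦ smul_left_injective k hv0 ?_⟩
    exact (hψ h).symm.trans (hval h α β e)
  obtain ⟨ψ₁, h₁⟩ := hψ μ hμ
  obtain ⟨ψ₂, h₂⟩ := hψ (-μ) hμ'
  refine ⟨ψ₁.toHomUnits / ψ₂.toHomUnits, fun g ↦ ?_, fun h hh ↦ ?_⟩
  · obtain ⟨α, β, e⟩ := ha.exists_eq_add_smul hd g.2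
    rw [MonoidHom.div_apply, div_eq_one, Units.ext_iff, MonoidHom.coe_toHomUnits,
      MonoidHom.coe_toHomUnits, h₁ g α β e, h₂ g α β e]
    constructor
    · intro h
      have hβ : β = 0 := by
        have : 2 * μ * β = 0 := by linear_combination h
        simpa [hμ0] using this
      exact ⟨α, by rw [e, hβ, zero_smul, add_zero]⟩
    · rintro ⟨c, hc⟩
      have e' : ρ g = c • 1 + (0 : k) • ρ a := by rw [hc, zero_smul, add_zero]
      rw [← h₁ g α β e, ← h₂ g α β e, h₁ g c 0 e', h₂ g c 0 e', zero_mul, zero_mul]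
  · have e : ρ h = (0 : k) • 1 + (1 : k) • ρ a := by rw [hh, zero_smul, one_smul, zero_add]
    rw [MonoidHom.div_apply, div_eq_iff_eq_mul, Units.ext_iff, Units.val_mul, Units.val_neg,
      Units.val_one, MonoidHom.coe_toHomUnits, MonoidHom.coe_toHomUnits, h₁ h 0 1 e, h₂ h 0 1 e]
    ring

theorem IsSplitting.exists_isMaximalClassPair [Finite G] {n : ℕ} (hn : 3 ≤ n)
    (hG : Nat.card G = 2 ^ n) (ha : ρ.IsSplitting a s) (hρ : ρ.IsIrreducible)
    (hd : finrank k V = 2) (hN : Nat.card ρ.scalarSubgroup = 2) :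
    ∃ x y : G, IsMaximalClassPair n x y := by
  have hV : Nontrivial V := nontrivial_of_finrank_pos (R := k) (by omega)
  obtain ⟨⟨z, hzN⟩, hz1, hz⟩ := (Nat.card_eq_two_iff' (1 : ρ.scalarSubgroup)).1 hN
  replace hz1 : z ≠ 1 := fun h ↦ hz1 (Subtype.ext h)
  replace hz : ∀ g ∈ ρ.scalarSubgroup, g = 1 ∨ g = z := by
    intro g hg
    by_cases h1 : g = 1
    · exact Or.inl h1
    · exact Or.inr (congrArg Subtype.val (hz ⟨g, hg⟩ fun h ↦ h1 (congrArg Subtype.val h)))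
  have hzz : z * z = 1 := (hz _ (mul_mem hzN hzN)).resolve_right fun h ↦ hz1 (mul_eq_left.1 h)
  obtain ⟨b, hb⟩ := ha.exists_notMem hρ
  have hindex := ha.index_commutingSubgroup hρ
  have hneg : (-1 : End k V) ≠ 1 := neg_one_ne_one_of_nontrivial
  have hcomm : ρ (b * a * (a * b)⁻¹) = -1 := by
    rw [map_mul, map_mul, ha.anticommute hb, neg_mul, ← map_mul, ← map_mul, mul_inv_cancel, map_one]
  have hbaz : b * a * (a * b)⁻¹ = z := by
    refine (hz _ ⟨-1, by rw [hcomm, neg_smul, one_smul]⟩).resolve_left fun h ↦ hneg ?_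
    rw [← hcomm, h, map_one]
  have hρz : ρ z = -1 := by rw [← hbaz, hcomm]
  have hinj : ∀ g, ρ g = 1 → g = 1 := by
    intro g hg
    refine (hz g ⟨1, by rw [hg, one_smul]⟩).resolve_right fun h ↦ hneg ?_
    rw [← hρz, ← h, hg]
  have hzc : ∀ g, g * z = z * g := by
    intro g
    refine mul_inv_eq_one.1 (hinj _ ?_)
    rw [map_mul, map_mul, hρz, mul_neg_one, ← neg_one_mul, ← hρz, ← map_mul, ← map_mul,
      mul_inv_cancel, map_one]
  obtain ⟨r, hr, hra⟩ := ha.exists_eigenvalueRatio hρ hd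
  have hfin : Finite r.range := Finite.of_surjective _ r.rangeRestrict_surjective
  have hcyc : IsCyclic r.range := isCyclic_subgroup_units _
  obtain ⟨⟨_, h, rfl⟩, hgen⟩ := IsCyclic.exists_generator (α := r.range)
  have hmod : ∀ (g : ρ.commutingSubgroup a) (m : ℤ), r g = r h ^ m →
      (g : G) = h ^ m ∨ (g : G) = h ^ m * z := by
    intro g m hg
    have h1 : r ((h ^ m)⁻¹ * g) = 1 := by rw [map_mul, map_inv, map_zpow, hg, inv_mul_cancel]
    rcases hz _ ((hr _).1 h1) with h2 | h2
    · left
      have h2 : ((h : G) ^ m)⁻¹ * g = 1 := h2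
      exact (inv_mul_eq_one.1 h2).symm
    · right
      have h2 : ((h : G) ^ m)⁻¹ * g = z := h2
      exact inv_mul_eq_iff_eq_mul.1 h2
  have hcardH : Nat.card (ρ.commutingSubgroup a) = 2 ^ (n - 1) := by
    have h1 := (ρ.commutingSubgroup a).card_mul_index
    rw [hindex, hG, ← pow_sub_one_mul (by omega : n ≠ 0) 2] at h1
    exact Nat.eq_of_mul_eq_mul_right two_pos h1
  have hord : orderOf (r h) = 2 ^ (n - 2) := by
    have h1 : Nat.card r.range = orderOf (r h) := by
      rw [← Subgroup.orderOf_mk (H := r.range) (r h) ⟨h, rfl⟩]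
      exact (orderOf_eq_card_of_forall_mem_zpowers hgen).symm
    have h2 : Nat.card r.ker = 2 := by
      rw [← hN]
      refine Nat.card_congr ⟨fun g ↦ ⟨g.1, (hr _).1 g.2⟩,
        fun g ↦ ⟨⟨g.1, ?_⟩, (hr _).2 g.2⟩, fun _ ↦ rfl, fun _ ↦ rfl⟩
      obtain ⟨c, hc⟩ := g.2
      rw [mem_commutingSubgroup, hc, smul_mul_assoc, mul_smul_comm, one_mul, mul_one]
    have h3 := r.ker.card_mul_index
    rw [Subgroup.index_ker, h1, h2, hcardH, show n - 1 = n - 2 + 1 by omega, pow_succ'] at h3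
    exact Nat.eq_of_mul_eq_mul_left two_pos h3
  refine IsMaximalClassPair.exists_of_conj hn hindex hzc hzz hz1 h.2 hb ?_ ?_ ?_
  · intro g hg
    obtain ⟨m, hm⟩ := hgen ⟨r ⟨g, hg⟩, ⟨_, rfl⟩⟩
    exact ⟨m, hmod ⟨g, hg⟩ m (congrArg Subtype.val hm).symm⟩
  · obtain ⟨α, β, e⟩ := ha.exists_eq_add_smul hd h.2
    have h1 : ρ (b * h * b⁻¹ * h) = (α * α - β * β * s) • 1 := by
      have h2 : ρ b * ρ h = (α • 1 - β • ρ a) * ρ b := by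
        rw [e, mul_add, mul_smul_comm, mul_one, mul_smul_comm, ha.anticommute hb, sub_mul,
          smul_mul_assoc, one_mul, smul_mul_assoc, smul_neg, sub_eq_add_neg]
      have h3 : ρ (b * h * b⁻¹) = α • 1 - β • ρ a := by
        rw [map_mul, map_mul, h2, mul_assoc, ← map_mul, mul_inv_cancel, map_one, mul_one]
      rw [map_mul, h3, e]
      simp only [sub_mul, mul_add, smul_mul_assoc, mul_smul_comm, ha.sq, one_mul, mul_one,
        sub_smul]
      module
    rcases hz _ ⟨_, h1⟩ with h2 | h2
    · left; exact mul_eq_one_iff_eq_inv.1 h2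
    · right; rw [hzc]; exact eq_mul_inv_of_mul_eq h2
  · have hqr : r h ^ 2 ^ (n - 3) = -1 := by
      have h1 : r h ^ 2 ^ (n - 3) * r h ^ 2 ^ (n - 3) = 1 := by
        rw [← pow_add, ← two_mul, ← pow_succ', show n - 3 + 1 = n - 2 by omega, ← hord,
          pow_orderOf_eq_one]
      have h2 : r h ^ 2 ^ (n - 3) ≠ 1 := by
        intro h2
        have h3 := orderOf_dvd_of_pow_eq_one h2
        rw [hord, Nat.pow_dvd_pow_iff_le_right (by norm_num)] at h3
        omega
      rw [Units.ext_iff] at h1 ⊢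
      rw [Ne, Units.ext_iff] at h2
      exact (mul_self_eq_one_iff.1 h1).resolve_left h2
    have hba : b * a * b⁻¹ = a * z := by
      have h1 : b * a = z * (a * b) := by rw [← hbaz, inv_mul_cancel_right]
      rw [h1, hzc, ← mul_assoc, mul_inv_cancel_right]
    have haH : a ∈ ρ.commutingSubgroup a := rfl
    have h1 := hmod ⟨a, haH⟩ ((2 ^ (n - 3) : ℕ) : ℤ) (by rw [zpow_natCast, hqr, hra _ rfl])
    rw [zpow_natCast] at h1
    have h2 : (h : G) ^ 2 ^ (n - 3) = a ∨ (h : G) ^ 2 ^ (n - 3) = a * z := by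
      refine h1.imp Eq.symm fun h1 ↦ ?_
      change a = _ at h1
      exact (eq_mul_inv_of_mul_eq h1.symm).trans (by rw [inv_eq_of_mul_eq_one_left hzz])
    rcases h2 with h2 | h2
    · rw [h2, hba]
    · rw [h2, ← mul_assoc, mul_assoc (b * a), ← hzc b⁻¹, ← mul_assoc, hba]

end Representation

namespace Representation

open Module

section Existence

variable {k G V : Type*} [Field k] [Group G] [AddCommGroup V] [Module k V]

/-- A nonzero invariant submodule of a finite-dimensional representation contains an irreducible
subrepresentation. -/
theorem exists_isIrreducible_subrepresentation_le [FiniteDimensional k V]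
    (ρ : Representation k G V) (U : Subrepresentation ρ) (hU : U.toSubmodule ≠ ⊥) :
    ∃ W : Subrepresentation ρ, W.toSubmodule ≤ U.toSubmodule ∧
      W.toRepresentation.IsIrreducible := by
  obtain ⟨W, ⟨hWU, hW0, hW⟩, hmin⟩ := WellFounded.has_min (wellFounded_lt (α := Submodule k V))
    {W | W ≤ U.toSubmodule ∧ W ≠ ⊥ ∧ ∀ g, ∀ v ∈ W, ρ g v ∈ W}
    ⟨U.toSubmodule, le_rfl, hU, fun g v hv ↦ U.apply_mem_toSubmodule g hv⟩
  refine ⟨⟨W, fun g v hv ↦ hW g v hv⟩, hWU, ?_⟩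
  rw [isIrreducible_iff_forall_submodule]
  refine ⟨Submodule.nontrivial_iff_ne_bot.2 hW0, fun X hX ↦ ?_⟩
  by_contra! h
  refine hmin (X.map W.subtype) ⟨(Submodule.map_subtype_le W X).trans hWU, fun h0 ↦ h.1 ?_, ?_⟩ ?_
  · exact (Submodule.eq_bot_iff X).2 fun x hx ↦
      Subtype.ext ((Submodule.eq_bot_iff _).1 h0 _ ⟨x, hx, rfl⟩)
  · rintro g _ ⟨v, hv, rfl⟩
    exact ⟨_, hX g v hv, rfl⟩
  · refine lt_of_le_of_ne (Submodule.map_subtype_le W X) fun h1 ↦ h.2 ?_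
    refine eq_top_iff.2 fun x _ ↦ ?_
    have hx : (x : V) ∈ X.map W.subtype := h1.ge x.2
    obtain ⟨y, hy, hyx⟩ := hx
    exact (Subtype.ext hyx : y = x) ▸ hy

universe u v

/-- A central involution acts as `-1` in some irreducible representation. -/
theorem exists_isIrreducible_apply_eq_neg_one (k : Type u) [Field k] [CharZero k]
    {G : Type v} [Group G] [Finite G] {z : G}
    (hz : ∀ g, g * z = z * g) (hzz : z * z = 1) (hz1 : z ≠ 1) :
    ∃ (V : Type u) (_ : AddCommGroup V) (_ : Module k V) (_ : FiniteDimensional k V)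
      (ρ : Representation k G V), ρ.IsIrreducible ∧ ρ z = -1 := by
  let ρ := Representation.ofMulAction k G (Shrink.{u} G)
  have : Finite (Shrink.{u} G) := Finite.of_equiv G (equivShrink.{u} G)
  let U : Subrepresentation ρ :=
    { toSubmodule := End.eigenspace (ρ z) (-1)
      apply_mem_toSubmodule := fun g v hv ↦ by
        rw [End.mem_eigenspace_iff] at hv ⊢
        rw [← End.mul_apply, ← map_mul, ← hz, map_mul, End.mul_apply, hv, map_smul] }
  have hU : U.toSubmodule ≠ ⊥ := by
    intro h
    let e : Shrink.{u} G := equivShrink.{u} G 1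
    let v : MonoidAlgebra k (Shrink.{u} G) := .single e 1 - .single (z • e) 1
    have hv : v ∈ End.eigenspace (ρ z) (-1) := by
      rw [End.mem_eigenspace_iff]
      simp only [v, ρ, map_sub, ofMulAction_single, smul_smul, hzz, one_smul, neg_smul, neg_sub]
    have hv0 : v = 0 := (Submodule.eq_bot_iff _).1 h v hv
    rw [sub_eq_zero, MonoidAlgebra.single_left_inj one_ne_zero] at hv0
    refine hz1 ?_
    have := congrArg (equivShrink.{u} G).symm hv0
    simpa [e] using this.symm
  obtain ⟨W, hWU, hW⟩ := ρ.exists_isIrreducible_subrepresentation_le U hU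
  refine ⟨W.toSubmodule, inferInstance, inferInstance, inferInstance, W.toRepresentation, hW, ?_⟩
  refine LinearMap.ext fun v ↦ Subtype.ext ?_
  have hv := End.mem_eigenspace_iff.1 (hWU v.2)
  rw [neg_one_smul] at hv
  exact hv

end Existence

theorem commute_of_finrank_eq_one {k V : Type*} [Field k] [AddCommGroup V] [Module k V]
    (hd : finrank k V = 1) (S T : End k V) : S * T = T * S := by
  obtain ⟨v, hv0, hv⟩ := finrank_eq_one_iff'.1 hd
  obtain ⟨c, hc⟩ := hv (S v)
  obtain ⟨d, hd⟩ := hv (T v)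
  ext w
  obtain ⟨e, rfl⟩ := hv w
  simp only [End.mul_apply, map_smul, ← hc, ← hd, smul_comm c d]

variable {k G V : Type*} [Field k] [IsAlgClosed k] [Group G] [AddCommGroup V]
  [Module k V] [FiniteDimensional k V] {ρ : Representation k G V} {n : ℕ} {x y : G}

theorem IsIrreducible.finrank_le_two [Finite G] (hρ : ρ.IsIrreducible)
    (h : IsDicyclicGenerated x y) : finrank k V ≤ 2 := by
  classical
  obtain ⟨hV, hirr⟩ := ρ.isIrreducible_iff_forall_submodule.1 hρ
  obtain ⟨c, hc⟩ := End.exists_eigenvalue (ρ x)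
  obtain ⟨v, hv⟩ := hc.exists_hasEigenvector
  have hpow : ∀ j : ℤ, ∃ d : k, ρ (x ^ j) v = d • v := by
    intro j
    obtain ⟨m, hm⟩ := mem_powers_iff_mem_zpowers.2 (Subgroup.zpow_mem_zpowers x j)
    refine ⟨c ^ m, ?_⟩
    simp only at hm
    rw [← hm, map_pow, hv.pow_apply]
  have hinv : ∀ g, ∀ w ∈ Submodule.span k (Set.range fun g ↦ ρ g v),
      ρ g w ∈ Submodule.span k (Set.range fun g ↦ ρ g v) := by
    intro g w hw
    refine Submodule.span_induction ?_ (by simp) (fun _ _ _ _ h₁ h₂ ↦ ?_) (fun _ _ _ h₁ ↦ ?_) hw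
    · rintro _ ⟨g', rfl⟩
      exact Submodule.subset_span ⟨g * g', by simp⟩
    · rw [map_add]; exact add_mem h₁ h₂
    · rw [map_smul]; exact Submodule.smul_mem _ _ h₁
  have hle : Submodule.span k (Set.range fun g ↦ ρ g v) ≤
      Submodule.span k (({v, ρ y v} : Finset V) : Set V) := by
    rw [Submodule.span_le]
    rintro _ ⟨g, rfl⟩
    obtain ⟨j, rfl | rfl⟩ := h g <;> obtain ⟨d, hd⟩ := hpow j
    · simp only [hd]
      exact Submodule.smul_mem _ d (Submodule.subset_span (by simp))
    · simp only [map_mul, End.mul_apply, hd, map_smul]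
      exact Submodule.smul_mem _ d (Submodule.subset_span (by simp))
  rcases hirr _ hinv with h0 | h0
  · exact absurd ((Submodule.eq_bot_iff _).1 h0 v (Submodule.subset_span ⟨1, by simp⟩)) hv.2
  · rw [h0, top_le_iff] at hle
    have h1 := finrank_span_finset_le_card (R := k) ({v, ρ y v} : Finset V)
    rw [Set.finrank, hle, finrank_top] at h1
    exact h1.trans Finset.card_le_two

variable [CharZero k]

/-- A nonlinear irreducible representation of a group of order `2 ^ n` either has dimension two,
and the zeros of its character are counted by the scalars, or its character has many zeros. -/
theorem IsIrreducible.zeros_dichotomy [Finite G] (hρ : ρ.IsIrreducible) (hn : 3 ≤ n)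
    (hG : Nat.card G = 2 ^ n) (hd : 1 < finrank k V) :
    (finrank k V = 2 ∧
      {g | ρ.character g = 0}.ncard = 2 ^ (n - 1) + Nat.card ρ.scalarSubgroup ∧
      2 ≤ Nat.card ρ.scalarSubgroup) ∨
    (2 < finrank k V ∧ 2 ^ (n - 1) + 2 < {g | ρ.character g = 0}.ncard) := by
  have hp : IsPGroup 2 G := IsPGroup.of_card hG
  have hnt : Nontrivial G := Finite.one_lt_card_iff_nontrivial.1
    (hG ▸ Nat.one_lt_two_pow (by omega))
  have hZ := hp.center_nontrivial
  obtain ⟨a, s, ha⟩ := hρ.exists_isSplitting hp hd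
  have hcardH : Nat.card (ρ.commutingSubgroup a) = 2 ^ (n - 1) := by
    have h1 := (ρ.commutingSubgroup a).card_mul_index
    rw [ha.index_commutingSubgroup hρ, hG, ← pow_sub_one_mul (by omega : n ≠ 0) 2] at h1
    exact Nat.eq_of_mul_eq_mul_right two_pos h1
  by_cases hd2 : finrank k V = 2
  · refine Or.inl ⟨hd2, by rw [ha.ncard_character_eq_zero hρ hd2, hcardH], ?_⟩
    exact (Finite.one_lt_card_iff_nontrivial.2 hZ).trans_le
      (Subgroup.card_le_of_le hρ.center_le_scalarSubgroup)
  · have hd3 : 2 < finrank k V := by omega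
    refine Or.inr ⟨hd3, ?_⟩
    have h1 := ha.five_mul_card_commutingSubgroup_le hp hρ hd3
    have h2 := hρ.finrank_sq_lt hZ
    obtain ⟨μ, hμ⟩ := IsAlgClosed.exists_pow_nat_eq s (n := 2) two_pos
    have h3 := ha.two_mul_finrank_eigenspace hρ ((pow_two μ).symm.trans hμ)
    have h4 : 4 ^ 2 ≤ finrank k V ^ 2 := Nat.pow_le_pow_left (by omega) 2
    have h5 : 2 ^ 4 < 2 ^ n := by rw [← hG]; omega
    have h6 : 4 < n := (Nat.pow_lt_pow_iff_right (by norm_num)).1 h5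
    have h7 : 2 ^ 4 ≤ 2 ^ (n - 1) := Nat.pow_le_pow_right (by norm_num) (by omega)
    rw [hcardH] at h1
    omega

theorem IsIrreducible.finrank_and_card_scalarSubgroup [Finite G] (hρ : ρ.IsIrreducible)
    (h : IsMaximalClassPair n x y) (hn : 3 ≤ n) (hG : Nat.card G = 2 ^ n)
    (hz : ρ (x ^ 2 ^ (n - 2)) = -1) :
    finrank k V = 2 ∧ Nat.card ρ.scalarSubgroup = 2 := by
  obtain ⟨hV, -⟩ := ρ.isIrreducible_iff_forall_submodule.1 hρ
  have hgen := h.isDicyclicGenerated (by omega) hG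
  have hnormal := Subgroup.normal_of_index_eq_two (h.index_zpowers (by omega) hG)
  have hord : orderOf (ρ x) = 2 ^ (n - 1) := by
    rw [show n - 1 = n - 2 + 1 by omega]
    refine orderOf_eq_prime_pow ?_ ?_
    · rw [← map_pow, hz]
      exact neg_one_ne_one_of_nontrivial
    · rw [pow_succ, pow_mul, ← map_pow, hz, neg_one_sq]
  have hfaith : ∀ u ∈ Subgroup.zpowers x, ρ u = 1 → u = 1 := by
    intro u hu hu1
    obtain ⟨m, rfl⟩ := mem_powers_iff_mem_zpowers.2 hu
    simp only [map_pow] at hu1 ⊢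
    rw [← orderOf_dvd_iff_pow_eq_one] at hu1 ⊢
    rwa [h.orderOf_eq, ← hord]
  have hcomm : y * x * y⁻¹ ≠ x := by
    intro hc
    rcases h.zpow_eq_of_conj_eq hn (k := 1) (by simpa using hc) with h1 | h1
    · rw [zpow_one] at h1
      have := h.orderOf_eq
      rw [h1, orderOf_one] at this
      have := Nat.one_lt_two_pow (n := n - 1) (by omega)
      omega
    · rw [zpow_one] at h1
      have h2 := h.pow_mul_self (by omega)
      rw [← h1, ← pow_two, ← orderOf_dvd_iff_pow_eq_one, h.orderOf_eq] at h2
      have h3 : 2 ^ (n - 1) ∣ 2 ^ 1 := h2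
      rw [Nat.pow_dvd_pow_iff_le_right (by norm_num)] at h3
      omega
  have hX : ρ (y * x * y⁻¹) ≠ ρ x := by
    intro hc
    refine hcomm (mul_inv_eq_one.1 (hfaith _ ?_ ?_))
    · exact mul_mem (hnormal.conj_mem x (Subgroup.mem_zpowers x) y)
        (inv_mem (Subgroup.mem_zpowers x))
    · rw [map_mul, hc, ← map_mul, mul_inv_cancel, map_one]
  have hscalar : ∀ g ∈ ρ.scalarSubgroup, ∀ u, ρ (u * g * u⁻¹) = ρ g := by
    rintro g ⟨c, hc⟩ u
    rw [map_mul, map_mul, hc, mul_smul_comm, mul_one, smul_mul_assoc, ← map_mul, mul_inv_cancel,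
      map_one]
  constructor
  · have h1 := hρ.finrank_le_two hgen
    have h2 : 0 < finrank k V := finrank_pos
    have h3 : finrank k V ≠ 1 := by
      intro h3
      refine hX ?_
      rw [map_mul, map_mul, commute_of_finrank_eq_one h3 (ρ y), mul_assoc, ← map_mul,
        mul_inv_cancel, map_one, mul_one]
    omega
  · have hset : (ρ.scalarSubgroup : Set G) = {1, x ^ 2 ^ (n - 2)} := by
      ext g
      simp only [SetLike.mem_coe, Set.mem_insert_iff, Set.mem_singleton_iff]
      constructor
      · intro hg
        obtain ⟨j, rfl | rfl⟩ := hgen g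
        · refine h.zpow_eq_of_conj_eq hn (mul_inv_eq_one.1 (hfaith _ ?_ ?_))
          · exact mul_mem (hnormal.conj_mem _ (Subgroup.zpow_mem_zpowers x j) y)
              (inv_mem (Subgroup.zpow_mem_zpowers x j))
          · rw [map_mul, hscalar _ hg, ← map_mul, mul_inv_cancel, map_one]
        · exfalso
          refine hX ?_
          obtain ⟨c, hc⟩ := hg
          have h1 : y * x * y⁻¹ = y * x ^ j * x * (y * x ^ j)⁻¹ := by group
          rw [h1, map_mul, map_mul, hc, smul_mul_assoc, one_mul, ← mul_one (ρ x),
            ← mul_smul_comm, ← hc, mul_assoc, ← map_mul, mul_inv_cancel, map_one]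
      · rintro (rfl | rfl)
        · exact one_mem _
        · exact ⟨-1, by rw [hz, neg_smul, one_smul]⟩
    change (ρ.scalarSubgroup : Set G).ncard = 2
    rw [hset, Set.ncard_pair (h.pow_ne_one (by omega)).symm]

end Representation

theorem IsMaximalClassPair.pow_comm {G : Type*} [Group G] {n : ℕ} {x y : G}
    (h : IsMaximalClassPair n x y) (hn : 3 ≤ n) (hG : Nat.card G = 2 ^ n) (g : G) :
    g * x ^ 2 ^ (n - 2) = x ^ 2 ^ (n - 2) * g := by
  have hzz := h.pow_mul_self (by omega)
  have hzinv := inv_eq_of_mul_eq_one_left hzz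
  have hy : y * x ^ 2 ^ (n - 2) = x ^ 2 ^ (n - 2) * y := by
    rw [← mul_inv_eq_iff_eq_mul, ← MulAut.conj_apply, map_pow, MulAut.conj_apply]
    rcases h.conj with h1 | ⟨-, h1⟩
    · rw [h1, inv_pow, hzinv]
    · have hpow : ∀ w : G, w * w = 1 → w ^ 2 ^ (n - 2) = 1 := by
        intro w hw
        obtain ⟨m, hm⟩ : ∃ m, 2 ^ (n - 2) = 2 * m := dvd_pow_self 2 (by omega)
        rw [hm, pow_mul, pow_two, hw, one_pow]
      have hcomm : Commute x⁻¹ (x ^ 2 ^ (n - 2)) := (Commute.refl x).inv_left.pow_right _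
      rw [h1, hcomm.mul_pow, inv_pow, hzinv, hpow _ hzz, mul_one]
  obtain ⟨k, rfl | rfl⟩ := h.isDicyclicGenerated (by omega) hG g
  · exact ((Commute.refl x).zpow_left k).pow_right _
  · rw [mul_assoc, (((Commute.refl x).zpow_left k).pow_right _).eq, ← mul_assoc, hy, mul_assoc]

/-- Let `G` be a group of order `2^n`, `n ≥ 3`. Every non-linear irreducible complex character of
`G` vanishes at at least `2^(n-1) + 2` elements, and some non-linear irreducible complex character
vanishes at exactly `2^(n-1) + 2` elements if and only if `G` is dihedral, generalized quaternion
or (with `n ≥ 4`) semidihedral of order `2^n`. (`DihedralGroup m` has order `2 * m` and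
`QuaternionGroup m` has order `4 * m`.) -/
theorem stmt1 {G : Type*} [Group G] [Finite G] {n : ℕ} (hn : 3 ≤ n)
    (hG : Nat.card G = 2 ^ n) :
    (∀ V : FDRep ℂ G, Simple V → 1 < Module.finrank ℂ V →
        2 ^ (n - 1) + 2 ≤ {g : G | V.character g = 0}.ncard) ∧
    ((∃ V : FDRep ℂ G, Simple V ∧ 1 < Module.finrank ℂ V ∧
        {g : G | V.character g = 0}.ncard = 2 ^ (n - 1) + 2) ↔
      (Nonempty (G ≃* DihedralGroup (2 ^ (n - 1))) ∨
       Nonempty (G ≃* QuaternionGroup (2 ^ (n - 2))) ∨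
       (4 ≤ n ∧ Nonempty (G ≃* SemidihedralGroup n)))) := by
  have hp : IsPGroup 2 G := IsPGroup.of_card hG
  have key := fun (V : FDRep ℂ G) (hV : Simple V) (hd : 1 < Module.finrank ℂ V) ↦
    Representation.IsIrreducible.zeros_dichotomy ((V.simple_iff_isIrreducible).1 hV) hn hG hd
  refine ⟨fun V hV hd ↦ ?_, fun ⟨V, hV, hd, hcard⟩ ↦ ?_, fun h ↦ ?_⟩
  · rcases key V hV hd with ⟨h1, h2, h3⟩ | h1
    · exact (Nat.add_le_add_left h3 _).trans h2.ge
    · exact h1.2.le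
  · rcases key V hV hd with ⟨h1, h2, h3⟩ | h1
    · have hirr := (V.simple_iff_isIrreducible).1 hV
      obtain ⟨a, s, ha⟩ := hirr.exists_isSplitting hp hd
      obtain ⟨x, y, hxy⟩ := ha.exists_isMaximalClassPair hn hG hirr h1
        (Nat.add_left_cancel (h2.symm.trans hcard))
      exact hxy.classification hn hG
    · exact absurd hcard h1.2.ne'
  · obtain ⟨x, y, hxy⟩ := IsMaximalClassPair.exists_of_mulEquiv hn hG h
    obtain ⟨V, _, _, _, ρ, hρ, hz⟩ := Representation.exists_isIrreducible_apply_eq_neg_one ℂ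
      (hxy.pow_comm hn hG) (hxy.pow_mul_self (by omega)) (hxy.pow_ne_one (by omega))
    obtain ⟨hd, hN⟩ := hρ.finrank_and_card_scalarSubgroup hxy hn hG hz
    have hs : Simple (FDRep.of ρ) := (FDRep.simple_iff_isIrreducible _).2 hρ
    have hd' : 1 < Module.finrank ℂ (FDRep.of ρ) := lt_of_lt_of_eq one_lt_two hd.symm
    refine ⟨FDRep.of ρ, hs, hd', ?_⟩
    rcases key _ hs hd' with ⟨h1, h2, h3⟩ | h1
    · exact h2.trans (congrArg _ hN)
    · exact absurd hd h1.1.ne'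
end

section
/- Let $p$ be a prime, let $G$ be a finite group of order $p^n$, and let $\chi$ be a non-linear irreducible complex character of $G$ (so necessarily $n \ge 3$). Then $\chi$ vanishes at at least $p^n - p^{n-1} + p^2 - p$ elements of $G$. Suppose that $\chi$ vanishes at exactly $p^n - p^{n-1} + p^2 - p$ elements of $G$. Then $\chi$ is faithful (that is, $\chi(g) = \chi(1)$ only for $g = 1$), $\chi(1) = p$, the center $Z(G)$ has order $p$, and $G$ is of maximal class, that is, nilpotent of class $n-1$. Let $Z_2(G)$ denote the second center, defined by $Z_2(G)/Z(G) = Z(G/Z(G))$. If $n > 3$, then $Z_2(G)$ has order $p^2$. Moreover, there is an abelian subgroup $U$ of index $p$ in $G$ such that the set of zeros of $\chi$ is exactly $(G - U) \cup (Z_2(G) - Z(G))$ and such that, if $n > 3$, $U$ is the unique maximal subgroup of $G$ having a character $\theta$ with induced character $\theta^G = \chi$. -/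
open CategoryTheory

/-- `χ` is the character of a finite-dimensional complex representation of `G`. -/
def IsComplexCharacter {G : Type*} [Group G] (χ : G → ℂ) : Prop :=
  ∃ V : FDRep ℂ G, V.character = χ

/-- `χ ∈ Irr(G)`: the character of an irreducible complex representation of `G`. -/
def IsIrrCharacter {G : Type*} [Group G] (χ : G → ℂ) : Prop :=
  ∃ V : FDRep ℂ G, Simple V ∧ V.character = χ

/-- `χ` is faithful: the kernel `{g | χ g = χ 1}` is trivial. -/
def IsFaithfulCharacter {G : Type*} [Group G] (χ : G → ℂ) : Prop :=
  {g : G | χ g = χ 1} = {1}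

open Classical in
/-- The induced class function `θ^G (g) = |H|⁻¹ ∑_{x ∈ G} θ°(x g x⁻¹)`, where `θ°` is `θ` on `H`
and `0` outside `H`. -/
noncomputable def inducedCharacter {G : Type*} [Group G] [Fintype G] (H : Subgroup G)
    (θ : H → ℂ) (g : G) : ℂ :=
  (Nat.card H : ℂ)⁻¹ * ∑ x : G, if h : x * g * x⁻¹ ∈ H then θ ⟨x * g * x⁻¹, h⟩ else 0

/-- `H` has a character that induces `χ`. -/
def IsInducedFrom {G : Type*} [Group G] [Fintype G] (χ : G → ℂ) (H : Subgroup G) : Prop :=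
  ∃ θ : H → ℂ, IsComplexCharacter θ ∧ inducedCharacter H θ = χ

/-- For a group `G` of order `p ^ n`: `G` is of maximal class, i.e. nilpotent of class `n - 1`. -/
def HasMaximalClass (G : Type*) [Group G] (n : ℕ) : Prop :=
  ∃ _ : Group.IsNilpotent G, Group.nilpotencyClass G + 1 = n

/-- The only `ρ`-invariant subspaces are `⊥` and `⊤`. -/
def NoInvariantSubspace {G V : Type*} [Group G] [AddCommGroup V] [Module ℂ V]
    (ρ : G →* V →ₗ[ℂ] V) : Prop :=
  ∀ W : Submodule ℂ V, (∀ g, ∀ w ∈ W, ρ g w ∈ W) → W = ⊥ ∨ W = ⊤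

theorem FDRep.noInvariantSubspace_of_simple {G : Type*} [Group G] (V : FDRep ℂ G) [Simple V] :
    NoInvariantSubspace V.ρ := by
  intro W hW
  by_cases hbot : W = ⊥
  · exact Or.inl hbot
  right
  let σ : Representation ℂ G W :=
    { toFun := fun g => (V.ρ g).restrict (hW g)
      map_one' := by ext w; simp
      map_mul' := by intro a b; ext w; simp [LinearMap.restrict_apply] }
  let ι : FDRep.of σ ⟶ V :=
    ⟨InducedCategory.homMk (ModuleCat.ofHom W.subtype), fun g => by
      ext1; rfl⟩
  have hinj : Function.Injective ι := Subtype.val_injective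
  have : Mono ι := ConcreteCategory.mono_of_injective ι hinj
  have hne : ι ≠ 0 := by
    intro h0
    apply hbot
    rw [Submodule.eq_bot_iff]
    intro w hw
    have : ι.hom.hom.hom ⟨w, hw⟩ = (0 : FDRep.of σ ⟶ V).hom.hom.hom ⟨w, hw⟩ := by rw [h0]
    exact this
  have := isIso_of_mono_of_nonzero hne
  rw [Submodule.eq_top_iff']
  intro v
  have h1 : inv ι ≫ ι = 𝟙 V := IsIso.inv_hom_id ι
  have : (inv ι ≫ ι).hom.hom.hom v = (𝟙 V : V ⟶ V).hom.hom.hom v := by rw [h1]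
  have h2 : (((inv ι).hom.hom.hom v : W) : V) = v := this
  rw [← h2]
  exact Subtype.property _

theorem FDRep.nontrivial_of_simple {G : Type*} [Group G] (V : FDRep ℂ G) [Simple V] :
    Nontrivial V := by
  by_contra h
  rw [not_nontrivial_iff_subsingleton] at h
  apply id_nonzero V
  ext v
  exact Subsingleton.elim (α := V) _ _

section
variable {G V : Type*} [Group G] [AddCommGroup V] [Module ℂ V]
  {ρ : G →* V →ₗ[ℂ] V}

theorem NoInvariantSubspace.finrank_eq_one_of_forall_smul [Nontrivial V]
    (h : NoInvariantSubspace ρ) (hs : ∀ g, ∃ c : ℂ, ρ g = c • 1) : Module.finrank ℂ V = 1 := by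
  obtain ⟨v, hv⟩ := exists_ne (0 : V)
  rw [finrank_eq_one_iff_of_nonzero v hv]
  refine (h (ℂ ∙ v) ?_).resolve_left (by simpa using hv)
  intro g w hw
  obtain ⟨c, hc⟩ := hs g
  rw [hc]
  exact Submodule.smul_mem _ _ hw

variable [FiniteDimensional ℂ V]

theorem NoInvariantSubspace.exists_eq_smul_one [Nontrivial V] (h : NoInvariantSubspace ρ)
    (T : Module.End ℂ V) (hT : ∀ g, T * ρ g = ρ g * T) : ∃ c : ℂ, T = c • 1 := by
  obtain ⟨c, hc⟩ := Module.End.exists_eigenvalue T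
  refine ⟨c, ?_⟩
  have := h (Module.End.eigenspace T c) (by
    intro g w hw
    rw [Module.End.mem_eigenspace_iff] at hw ⊢
    have := congrArg (fun f => f w) (hT g)
    simp only [Module.End.mul_apply] at this
    rw [this, hw, map_smul])
  rcases this with h0 | h1
  · exact absurd h0 hc
  · ext v
    have : v ∈ Module.End.eigenspace T c := by rw [h1]; trivial
    rw [Module.End.mem_eigenspace_iff] at this
    simpa using this

/-- A set of pairwise commuting operators has a common eigenvector. -/
theorem exists_common_eigenvector [Nontrivial V] (S : Set (Module.End ℂ V))
    (hS : ∀ a ∈ S, ∀ b ∈ S, a * b = b * a) : ∃ v : V, v ≠ 0 ∧ ∀ a ∈ S, ∃ c : ℂ, a v = c • v := by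
  classical
  let P : ℕ → Prop := fun d => ∃ W : Submodule ℂ V, W ≠ ⊥ ∧ (∀ a ∈ S, ∀ w ∈ W, a w ∈ W) ∧
    Module.finrank ℂ W = d
  have hP : ∃ d, P d := ⟨_, ⊤, top_ne_bot, fun _ _ _ _ => trivial, rfl⟩
  obtain ⟨W, hW, hinv, hd⟩ := Nat.find_spec hP
  obtain ⟨v, hv, hv0⟩ := W.exists_mem_ne_zero_of_ne_bot hW
  refine ⟨v, hv0, fun a ha => ?_⟩
  have : Nontrivial W := Submodule.nontrivial_iff_ne_bot.mpr hW
  obtain ⟨c, hc⟩ := Module.End.exists_eigenvalue (a.restrict (hinv a ha))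
  obtain ⟨w, hw⟩ := hc.exists_hasEigenvector
  have hle : W ⊓ Module.End.eigenspace a c = W := by
    refine Submodule.eq_of_le_of_finrank_le inf_le_left ?_
    rw [hd]
    refine Nat.find_min' hP ⟨_, ?_, ?_, rfl⟩
    · rw [Submodule.ne_bot_iff]
      refine ⟨w, ⟨w.2, ?_⟩, fun h0 => hw.2 (Subtype.ext h0)⟩
      have := congrArg Subtype.val hw.apply_eq_smul
      exact Module.End.mem_eigenspace_iff.mpr this
    · rintro b hb u ⟨hu1, hu2⟩
      refine ⟨hinv b hb u hu1, ?_⟩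
      have hu2 := Module.End.mem_eigenspace_iff.mp hu2
      refine Module.End.mem_eigenspace_iff.mpr ?_
      have := congrArg (fun f => f u) (hS a ha b hb)
      simp only [Module.End.mul_apply] at this
      rw [this, hu2, map_smul]
  have : v ∈ W ⊓ Module.End.eigenspace a c := by rw [hle]; exact hv
  exact ⟨c, Module.End.mem_eigenspace_iff.mp this.2⟩

end

theorem IsPGroup.exists_mem_center_of_normal {G : Type*} [Group G] [Finite G] {p : ℕ}
    [Fact p.Prime] (hG : IsPGroup p G) (N : Subgroup G) [N.Normal] (hN : N ≠ ⊥) :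
    ∃ k ∈ N, k ≠ 1 ∧ k ∈ Subgroup.center G := by
  have hact : IsPGroup p (ConjAct G) := hG.of_equiv ConjAct.toConjAct
  have hN' : Nontrivial N := (Subgroup.nontrivial_iff_ne_bot N).mpr hN
  have hdvd : p ∣ Nat.card N := by
    rcases (hG.to_subgroup N).card_eq_or_dvd with h | h
    · exact absurd (Finite.one_lt_card (α := N)) (by omega)
    · exact h
  obtain ⟨b, hb, hne⟩ := hact.exists_fixed_point_of_prime_dvd_card_of_fixed_point N hdvd
    (a := (1 : N)) (by intro g; ext; simp)
  refine ⟨b, b.2, fun h => hne (Subtype.ext h.symm), ?_⟩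
  rw [Subgroup.mem_center_iff]
  intro g
  have := congrArg Subtype.val (hb (ConjAct.toConjAct g))
  have this : g * (b : G) * g⁻¹ = b := this
  exact mul_inv_eq_iff_eq_mul.mp this

theorem QuotientGroup.mk_mem_center_iff {G : Type*} [Group G] (W : Subgroup G) [W.Normal] (k : G) :
    (k : G ⧸ W) ∈ Subgroup.center (G ⧸ W) ↔ ∀ y, k * y * k⁻¹ * y⁻¹ ∈ W := by
  rw [Subgroup.mem_center_iff]
  constructor
  · intro h y
    rw [← QuotientGroup.eq_one_iff]
    simp only [QuotientGroup.mk_mul, QuotientGroup.mk_inv]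
    rw [← h (y : G ⧸ W)]
    group
  · intro h y
    obtain ⟨y, rfl⟩ := QuotientGroup.mk_surjective y
    have := (QuotientGroup.eq_one_iff _).mpr (h y)
    simp only [QuotientGroup.mk_mul, QuotientGroup.mk_inv] at this
    rw [mul_inv_eq_one, mul_inv_eq_iff_eq_mul] at this
    exact this.symm

theorem IsPGroup.exists_mem_commutators_mem {G : Type*} [Group G] [Finite G] {p : ℕ}
    [Fact p.Prime] (hG : IsPGroup p G) (C W : Subgroup G) [C.Normal] [W.Normal] (h : ¬ C ≤ W) :
    ∃ k ∈ C, k ∉ W ∧ ∀ y, k * y * k⁻¹ * y⁻¹ ∈ W := by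
  have : (C.map (QuotientGroup.mk' W)).Normal :=
    Subgroup.Normal.map inferInstance _ (QuotientGroup.mk'_surjective W)
  obtain ⟨q, ⟨k, hk, rfl⟩, hq1, hq⟩ :=
    (hG.to_quotient W).exists_mem_center_of_normal (C.map (QuotientGroup.mk' W)) (by
      rw [ne_eq, Subgroup.map_eq_bot_iff, QuotientGroup.ker_mk']
      exact h)
  refine ⟨k, hk, fun hkW => hq1 ((QuotientGroup.eq_one_iff k).mpr hkW), ?_⟩
  exact (QuotientGroup.mk_mem_center_iff W k).mp hq

theorem IsPGroup.exists_pow_mem_commutators_mem {G : Type*} [Group G] [Finite G] {p : ℕ}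
    [Fact p.Prime] (hG : IsPGroup p G) (W : Subgroup G) [W.Normal] (h : W ≠ ⊤) :
    ∃ g : G, orderOf (g : G ⧸ W) = p ∧ ∀ y, g * y * g⁻¹ * y⁻¹ ∈ W := by
  have : Nontrivial (G ⧸ W) := QuotientGroup.nontrivial_iff.mpr h
  have hZ := (hG.to_quotient W).center_nontrivial
  have hdvd : p ∣ Nat.card (Subgroup.center (G ⧸ W)) := by
    rcases ((hG.to_quotient W).to_subgroup (Subgroup.center (G ⧸ W))).card_eq_or_dvd with h | h
    · exact absurd (Finite.one_lt_card (α := Subgroup.center (G ⧸ W))) (by omega)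
    · exact h
  obtain ⟨⟨q, hq⟩, hord⟩ := exists_prime_orderOf_dvd_card' p hdvd
  obtain ⟨g, rfl⟩ := QuotientGroup.mk_surjective q
  refine ⟨g, ?_, (QuotientGroup.mk_mem_center_iff W g).mp hq⟩
  rwa [Subgroup.orderOf_mk] at hord

/-- A nonabelian normal subgroup of a `p`-group contains two elements whose commutator is a
nontrivial central element of the whole group. -/
theorem IsPGroup.exists_commutator_mem_center {G : Type*} [Group G] [Finite G] {p : ℕ}
    [Fact p.Prime] (hG : IsPGroup p G) (C : Subgroup G) [hC : C.Normal]
    (h : ¬ ∀ x ∈ C, ∀ y ∈ C, x * y = y * x) :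
    ∃ k ∈ C, ∃ y ∈ C, k * y * k⁻¹ * y⁻¹ ∈ Subgroup.center G ∧ k * y * k⁻¹ * y⁻¹ ≠ 1 := by
  let W : Subgroup G := C ⊓ Subgroup.centralizer C
  have hWc : ∀ w ∈ W, ∀ c ∈ C, c * w = w * c := fun w hw c hc =>
    Subgroup.mem_centralizer_iff.mp hw.2 c hc
  have hCW : ¬ C ≤ W := fun hle => h fun x hx y hy => (hWc y (hle hy) x hx)
  obtain ⟨k, hkC, hkW, hk⟩ := hG.exists_mem_commutators_mem C W hCW
  let D : Subgroup G :=
    { carrier := {d | ∃ y ∈ C, k * y * k⁻¹ * y⁻¹ = d}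
      one_mem' := ⟨1, C.one_mem, by group⟩
      mul_mem' := by
        rintro _ _ ⟨a, ha, rfl⟩ ⟨b, hb, rfl⟩
        refine ⟨a * b, C.mul_mem ha hb, ?_⟩
        calc k * (a * b) * k⁻¹ * (a * b)⁻¹
            = k * a * k⁻¹ * ((k * b * k⁻¹ * b⁻¹) * a⁻¹) := by group
          _ = _ := by rw [← (hWc _ (hk b) a⁻¹ (C.inv_mem ha))]; group
      inv_mem' := by
        rintro _ ⟨a, ha, rfl⟩
        refine ⟨a⁻¹, C.inv_mem ha, ?_⟩
        have := hWc _ (W.inv_mem (hk a)) a⁻¹ (C.inv_mem ha)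
        calc k * a⁻¹ * k⁻¹ * a⁻¹⁻¹ = a⁻¹ * (k * a * k⁻¹ * a⁻¹)⁻¹ * a⁻¹⁻¹ := by group
          _ = _ := by rw [this]; group }
  have hD : D.Normal := by
    constructor
    rintro _ ⟨y, hy, rfl⟩ x
    refine ⟨x * y * x⁻¹, hC.conj_mem y hy x, ?_⟩
    have hyx := hC.conj_mem y hy x
    have h1 := hWc _ (W.inv_mem (hk x)) _ hyx
    have e : x * k * x⁻¹ = (k * x * k⁻¹ * x⁻¹)⁻¹ * k := by group
    have h2 := hWc _ (W.inv_mem (hk x)) (k * (x * y * x⁻¹) * k⁻¹) (hC.conj_mem _ hyx k)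
    symm
    calc x * (k * y * k⁻¹ * y⁻¹) * x⁻¹
        = (x * k * x⁻¹) * (x * y * x⁻¹) * (x * k * x⁻¹)⁻¹ * (x * y * x⁻¹)⁻¹ := by group
      _ = ((k * x * k⁻¹ * x⁻¹)⁻¹ * (k * (x * y * x⁻¹) * k⁻¹)) * (k * x * k⁻¹ * x⁻¹)⁻¹⁻¹
            * (x * y * x⁻¹)⁻¹ := by rw [e]; group
      _ = _ := by rw [← h2]; group
  have hDne : D ≠ ⊥ := by
    intro hbot
    apply hkW
    refine ⟨hkC, Subgroup.mem_centralizer_iff.mpr fun y hy => ?_⟩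
    have : k * y * k⁻¹ * y⁻¹ ∈ D := ⟨y, hy, rfl⟩
    rw [hbot, Subgroup.mem_bot, mul_inv_eq_one, mul_inv_eq_iff_eq_mul] at this
    exact this.symm
  obtain ⟨_, ⟨y, hy, rfl⟩, hne, hcen⟩ := hG.exists_mem_center_of_normal D hDne
  exact ⟨k, hkC, y, hy, hcen, hne⟩

theorem Subgroup.isCoatom_of_prime_index {G : Type*} [Group G] (C : Subgroup G)
    (h : C.index.Prime) : IsCoatom C := by
  constructor
  · rintro rfl
    simp [Nat.not_prime_one] at h
  · intro M hM
    have := Subgroup.relIndex_mul_index hM.le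
    rcases (Nat.Prime.eq_one_or_self_of_dvd h _ (Dvd.intro_left _ this)) with h1 | h1
    · exact Subgroup.index_eq_one.mp h1
    · exfalso
      rw [h1] at this
      have h2 : C.relIndex M = 1 := by
        have := h.pos
        nlinarith
      exact hM.not_ge (Subgroup.relIndex_eq_one.mp h2)

/-- If the members of `C` outside a proper subgroup `H` lie in `M`, then so does all
of `C`. -/
theorem Subgroup.le_of_sdiff_subset {G : Type*} [Group G] {C H M : Subgroup G} (hHC : H < C)
    (h : ∀ c ∈ C, c ∉ H → c ∈ M) : C ≤ M := by
  obtain ⟨k, hkC, hkH⟩ := SetLike.exists_of_lt hHC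
  intro c hc
  by_cases hcH : c ∈ H
  · have h1 := h (k * c) (C.mul_mem hkC hc) (fun h' => hkH ((H.mul_mem_cancel_right hcH).mp h'))
    exact (M.mul_mem_cancel_left (h k hkC hkH)).mp h1
  · exact h c hc hcH

theorem IsPGroup.pow_dvd_card_upperCentralSeries {G : Type*} [Group G] [Finite G]
    [Group.IsNilpotent G] {p : ℕ} [Fact p.Prime] (hG : IsPGroup p G) (i : ℕ)
    (hi : i ≤ Group.nilpotencyClass G) : p ^ i ∣ Nat.card (Subgroup.upperCentralSeries G i) := by
  induction i with
  | zero => simp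
  | succ i ih =>
    have hlt : Subgroup.upperCentralSeries G i < Subgroup.upperCentralSeries G (i + 1) :=
      Subgroup.upperCentralSeries.StrictMonoOn G (by simp; omega) (by simpa using hi) (Nat.lt_succ_self i)
    have h1 := Subgroup.relIndex_mul_relIndex ⊥ _ _ bot_le hlt.le
    rw [Subgroup.relIndex_bot_left, Subgroup.relIndex_bot_left] at h1
    rw [← h1, pow_succ]
    refine mul_dvd_mul (ih (by omega)) ?_
    rcases ((hG.to_subgroup (Subgroup.upperCentralSeries G (i + 1))).index
      ((Subgroup.upperCentralSeries G i).subgroupOf (Subgroup.upperCentralSeries G (i + 1)))) with ⟨m, hm⟩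
    rw [Subgroup.relIndex, hm]
    refine dvd_pow_self p fun h0 => hlt.not_ge ?_
    rw [h0, pow_zero] at hm
    exact Subgroup.relIndex_eq_one.mp hm

theorem index_upperCentralSeries_succ_not_prime {G : Type*} [Group G] (m : ℕ) :
    ¬ (Subgroup.upperCentralSeries G (m + 1)).index.Prime := by
  intro hprime
  have hco := Subgroup.isCoatom_of_prime_index _ hprime
  obtain ⟨x, -, hx⟩ := SetLike.exists_of_lt hco.lt_top
  apply hx
  rw [Subgroup.mem_upperCentralSeries_succ_iff]
  let E : Subgroup G := (Subgroup.centralizer {(x : G ⧸ Subgroup.upperCentralSeries G m)}).comap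
    (QuotientGroup.mk' (Subgroup.upperCentralSeries G m))
  have hE : ∀ y, y ∈ E ↔ x * y * x⁻¹ * y⁻¹ ∈ Subgroup.upperCentralSeries G m := by
    intro y
    rw [Subgroup.mem_comap, Subgroup.mem_centralizer_singleton_iff, ← QuotientGroup.eq_one_iff]
    simp only [QuotientGroup.mk_mul, QuotientGroup.mk_inv]
    rw [mul_inv_eq_one, mul_inv_eq_iff_eq_mul]
    exact eq_comm
  have hle : Subgroup.upperCentralSeries G (m + 1) ≤ E := by
    intro y hy
    rw [hE]
    rw [Subgroup.mem_upperCentralSeries_succ_iff] at hy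
    have := (Subgroup.upperCentralSeries G m).inv_mem (hy x)
    rw [commutatorElement_inv] at this
    exact this
  have hxE : x ∈ E := by
    rw [hE]; simp
  have hlt : Subgroup.upperCentralSeries G (m + 1) < E := lt_of_le_of_ne hle (fun h => hx (h ▸ hxE))
  exact fun y => (hE y).mp (hco.2 _ hlt ▸ Subgroup.mem_top y)

theorem IsPGroup.nilpotencyClass_lt {G : Type*} [Group G] [Finite G] [Group.IsNilpotent G]
    {p n : ℕ} [Fact p.Prime] (hG : Nat.card G = p ^ n) (hn : 2 ≤ n) :
    Group.nilpotencyClass G + 1 ≤ n := by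
  have hp : p.Prime := Fact.out
  rcases hc : Group.nilpotencyClass G with _ | _ | m
  · omega
  · omega
  have h1 := (IsPGroup.of_card hG).pow_dvd_card_upperCentralSeries (m + 1) (by omega)
  have h2 := (Subgroup.upperCentralSeries G (m + 1)).card_mul_index
  obtain ⟨k, hk⟩ := (IsPGroup.of_card hG).index (Subgroup.upperCentralSeries G (m + 1))
  have hk2 : 2 ≤ k := by
    by_contra hlt
    have : k = 0 ∨ k = 1 := by omega
    rcases this with rfl | rfl
    · rw [pow_zero, Subgroup.index_eq_one, Subgroup.upperCentralSeries_eq_top_iff_nilpotencyClass_le] at hk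
      omega
    · rw [pow_one] at hk
      exact index_upperCentralSeries_succ_not_prime (G := G) m (hk ▸ hp)
  have h3 : p ^ (m + 1 + k) ∣ p ^ n := by
    rw [← hG, ← h2, hk, pow_add]
    exact mul_dvd_mul_right h1 _
  have := (Nat.pow_dvd_pow_iff_le_right hp.one_lt).mp h3
  omega

theorem card_inf_upperCentralSeries_le {G : Type*} [Group G] [Finite G] (C : Subgroup G)
    [hC : C.Normal] (hcomm : ∀ x ∈ C, ∀ y ∈ C, x * y = y * x) (hco : IsCoatom C) (i : ℕ) :
    Nat.card (C ⊓ Subgroup.upperCentralSeries G i : Subgroup G) ≤ Nat.card (Subgroup.center G) ^ i := by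
  obtain ⟨x, -, hx⟩ := SetLike.exists_of_lt hco.lt_top
  let φ : C →* C :=
    { toFun := fun k => ⟨k * x * (k : G)⁻¹ * x⁻¹, by
        have := C.mul_mem k.2 (hC.conj_mem _ (C.inv_mem k.2) x)
        simpa [mul_assoc] using this⟩
      map_one' := by ext; simp
      map_mul' := by
        intro a b
        ext
        have hb : (x * (b : G)⁻¹ * x⁻¹) ∈ C := hC.conj_mem _ (C.inv_mem b.2) x
        have ha : (x * (a : G)⁻¹ * x⁻¹) ∈ C := hC.conj_mem _ (C.inv_mem a.2) x
        simp only [Subgroup.coe_mul]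
        calc (a * b : G) * x * (a * b : G)⁻¹ * x⁻¹
            = a * ((b * (x * (b : G)⁻¹ * x⁻¹)) * (x * (a : G)⁻¹ * x⁻¹)) := by group
          _ = a * ((x * (a : G)⁻¹ * x⁻¹) * (b * (x * (b : G)⁻¹ * x⁻¹))) := by
            rw [hcomm _ (C.mul_mem b.2 hb) _ ha]
          _ = _ := by group }
  have hker : ∀ k, φ k = 1 → (k : G) ∈ Subgroup.center G := by
    intro k hk
    have hk : (k : G) * x * (k : G)⁻¹ * x⁻¹ = 1 := congrArg Subtype.val hk
    rw [mul_inv_eq_one, mul_inv_eq_iff_eq_mul] at hk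
    have hle : C ≤ Subgroup.centralizer {(k : G)} := fun y hy =>
      Subgroup.mem_centralizer_singleton_iff.mpr (hcomm y hy k k.2)
    have hxm : x ∈ Subgroup.centralizer {(k : G)} :=
      Subgroup.mem_centralizer_singleton_iff.mpr hk.symm
    have htop := hco.2 _ (lt_of_le_of_ne hle fun h => hx (h ▸ hxm))
    rw [Subgroup.mem_center_iff]
    intro g
    exact Subgroup.mem_centralizer_singleton_iff.mp (htop ▸ trivial)
  induction i with
  | zero => simp
  | succ i ih =>
    let A := (Subgroup.upperCentralSeries G (i + 1)).subgroupOf C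
    let B := (Subgroup.upperCentralSeries G i).subgroupOf C
    have hA : Nat.card A = Nat.card (C ⊓ Subgroup.upperCentralSeries G (i + 1) : Subgroup G) := by
      change Nat.card ((Subgroup.upperCentralSeries G (i + 1)).subgroupOf C) = _
      rw [← Subgroup.inf_subgroupOf_left]
      exact Nat.card_congr (Subgroup.subgroupOfEquivOfLe inf_le_left).toEquiv
    have hB : Nat.card B = Nat.card (C ⊓ Subgroup.upperCentralSeries G i : Subgroup G) := by
      change Nat.card ((Subgroup.upperCentralSeries G i).subgroupOf C) = _
      rw [← Subgroup.inf_subgroupOf_left]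
      exact Nat.card_congr (Subgroup.subgroupOfEquivOfLe inf_le_left).toEquiv
    let ψ : A →* B := (φ.comp A.subtype).codRestrict B (by
      rintro ⟨⟨k, hk⟩, hkA⟩
      exact (Subgroup.mem_upperCentralSeries_succ_iff.mp hkA) x)
    have hψ : Nat.card ψ.ker ≤ Nat.card (Subgroup.center G) := by
      refine Nat.card_le_card_of_injective
        (fun k => (⟨k.1.1.1, hker k.1.1 (congrArg Subtype.val k.2)⟩ : Subgroup.center G)) ?_
      intro a b hab
      have := congrArg Subtype.val hab
      exact Subtype.ext (Subtype.ext (Subtype.ext this))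
    have h1 : Nat.card A = Nat.card ψ.ker * ψ.ker.index := ψ.ker.card_mul_index.symm
    have h2 : ψ.ker.index ≤ Nat.card B := by
      rw [Subgroup.index_ker]
      exact Subgroup.card_le_card_group _
    rw [← hA, h1, pow_succ, mul_comm]
    exact Nat.mul_le_mul (h2.trans (hB ▸ ih)) hψ

theorem hasMaximalClass_of_abelian_coatom {G : Type*} [Group G] [Finite G] {p n : ℕ}
    [Fact p.Prime] (hG : Nat.card G = p ^ n) (hn : 2 ≤ n) (C : Subgroup G)
    (hcomm : ∀ x ∈ C, ∀ y ∈ C, x * y = y * x) [C.Normal] (hind : C.index = p)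
    (hZ : Nat.card (Subgroup.center G) = p) : HasMaximalClass G n := by
  have hp : p.Prime := Fact.out
  have hnil : Group.IsNilpotent G := (IsPGroup.of_card hG).isNilpotent
  refine ⟨hnil, le_antisymm (IsPGroup.nilpotencyClass_lt hG hn) ?_⟩
  have h1 := card_inf_upperCentralSeries_le C hcomm
    (C.isCoatom_of_prime_index (hind ▸ hp)) (Group.nilpotencyClass G)
  rw [Subgroup.upperCentralSeries_nilpotencyClass, inf_top_eq, hZ] at h1
  have h2 := C.card_mul_index
  have h3 : p ^ n ≤ p ^ (Group.nilpotencyClass G + 1) := by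
    rw [← hG, ← h2, hind, pow_succ]
    exact Nat.mul_le_mul_right _ h1
  exact (Nat.pow_le_pow_iff_right hp.one_lt).mp h3

section
variable {G V : Type*} [Group G] [AddCommGroup V] [Module ℂ V]

/-- The elements of `G` that `ρ` maps to scalars. -/
def scalarSubgroup (ρ : G →* V →ₗ[ℂ] V) : Subgroup G where
  carrier := {g | ∃ c : ℂ, ρ g = c • 1}
  one_mem' := ⟨1, by simp⟩
  mul_mem' := by
    rintro a b ⟨c, hc⟩ ⟨d, hd⟩
    exact ⟨c * d, by rw [map_mul, hc, hd, smul_mul_smul_comm, one_mul]⟩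
  inv_mem' := by
    rintro a ⟨c, hc⟩
    have h1 : ρ a⁻¹ * ρ a = 1 := by rw [← map_mul, inv_mul_cancel, map_one]
    rw [hc, mul_smul_comm, mul_one] at h1
    by_cases h0 : c = 0
    · rw [h0, zero_smul] at h1
      exact ⟨0, by rw [← mul_one (ρ a⁻¹), ← h1, mul_zero, smul_zero]⟩
    · exact ⟨c⁻¹, by rw [← h1, smul_smul, inv_mul_cancel₀ h0, one_smul]⟩

variable (ρ : G →* V →ₗ[ℂ] V)

theorem mem_scalarSubgroup {g : G} : g ∈ scalarSubgroup ρ ↔ ∃ c : ℂ, ρ g = c • 1 := Iff.rfl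

instance scalarSubgroup_normal : (scalarSubgroup ρ).Normal := by
  constructor
  rintro a ⟨c, hc⟩ x
  refine ⟨c, ?_⟩
  rw [map_mul, map_mul, hc, mul_smul_comm, mul_one, smul_mul_assoc, ← map_mul, mul_inv_cancel,
    map_one]

theorem map_ne_zero_of_nontrivial [Nontrivial V] (g : G) : ρ g ≠ 0 := by
  intro h
  have : ρ g * ρ g⁻¹ = 1 := by rw [← map_mul, mul_inv_cancel, map_one]
  rw [h, zero_mul] at this
  exact zero_ne_one this

theorem trace_eq_zero_of_twist {k y : G} {c : ℂ} (hc : c ≠ 1)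
    (h : ρ k * ρ y = c • (ρ y * ρ k)) : LinearMap.trace ℂ V (ρ y) = 0 := by
  have h1 : LinearMap.trace ℂ V (ρ k * ρ y * ρ k⁻¹) = LinearMap.trace ℂ V (ρ y) := by
    rw [LinearMap.trace_mul_comm, ← mul_assoc, ← map_mul, inv_mul_cancel, map_one, one_mul]
  rw [h, smul_mul_assoc, mul_assoc, ← map_mul, mul_inv_cancel, map_one, mul_one, map_smul,
    smul_eq_mul] at h1
  have h2 : (c - 1) * LinearMap.trace ℂ V (ρ y) = 0 := by rw [sub_mul, h1]; ring
  exact (mul_eq_zero.mp h2).resolve_left (sub_ne_zero.mpr hc)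

theorem twist_of_commutator {k y : G} {c : ℂ} (h : ρ (k * y * k⁻¹ * y⁻¹) = c • 1) :
    ρ k * ρ y = c • (ρ y * ρ k) := by
  have : k * y = (k * y * k⁻¹ * y⁻¹) * (y * k) := by group
  rw [← map_mul, this, map_mul, h, smul_mul_assoc, one_mul, map_mul]

theorem inv_twist {k y : G} {c : ℂ} (h : ρ k * ρ y = c • (ρ y * ρ k)) (hc : c ≠ 0) :
    ρ y * ρ k = c⁻¹ • (ρ k * ρ y) := by
  rw [h, smul_smul, inv_mul_cancel₀ hc, one_smul]

variable [Nontrivial V] {ρ}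

theorem twist_ne_zero {k y : G} {c : ℂ} (h : ρ k * ρ y = c • (ρ y * ρ k)) : c ≠ 0 := by
  rintro rfl
  rw [zero_smul, ← map_mul] at h
  exact map_ne_zero_of_nontrivial ρ _ h

variable [FiniteDimensional ℂ V]

theorem NoInvariantSubspace.exists_twist (hρ : NoInvariantSubspace ρ) {h : G}
    (hc : ∀ y, h * y * h⁻¹ * y⁻¹ ∈ scalarSubgroup ρ) (hh : h ∉ scalarSubgroup ρ) :
    ∃ y, ∃ c : ℂ, c ≠ 1 ∧ ρ h * ρ y = c • (ρ y * ρ h) := by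
  by_contra hcon
  push Not at hcon
  apply hh
  apply hρ.exists_eq_smul_one
  intro y
  obtain ⟨c, hcy⟩ := hc y
  have h1 := twist_of_commutator ρ hcy
  by_cases hc1 : c = 1
  · rw [h1, hc1, one_smul]
  · exact absurd h1 (hcon y c hc1)

theorem NoInvariantSubspace.trace_eq_zero (hρ : NoInvariantSubspace ρ) {h : G}
    (hc : ∀ y, h * y * h⁻¹ * y⁻¹ ∈ scalarSubgroup ρ) (hh : h ∉ scalarSubgroup ρ) :
    LinearMap.trace ℂ V (ρ h) = 0 := by
  obtain ⟨y, c, hc1, hy⟩ := hρ.exists_twist hc hh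
  refine trace_eq_zero_of_twist ρ (k := y) (c := c⁻¹) (by simpa using hc1) ?_
  exact inv_twist ρ hy (twist_ne_zero hy)

theorem NoInvariantSubspace.exists_twist_hom [Finite G] {p : ℕ} [Fact p.Prime]
    (hρ : NoInvariantSubspace ρ) (hG : IsPGroup p G) (hdim : Module.finrank ℂ V ≠ 1) :
    ∃ (g : G) (ψ : G →* ℂˣ), orderOf (g : G ⧸ scalarSubgroup ρ) = p ∧
      (∀ y, g * y * g⁻¹ * y⁻¹ ∈ scalarSubgroup ρ) ∧
      (∀ y, ρ g * ρ y = (ψ y : ℂ) • (ρ y * ρ g)) ∧ ψ.ker.index = p := by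
  have hp : p.Prime := Fact.out
  have htop : scalarSubgroup ρ ≠ ⊤ := by
    intro htop
    exact hdim (hρ.finrank_eq_one_of_forall_smul fun g =>
      (mem_scalarSubgroup ρ).mp (htop ▸ Subgroup.mem_top g))
  obtain ⟨g, hord, hcomm⟩ := hG.exists_pow_mem_commutators_mem (scalarSubgroup ρ) htop
  have htw : ∀ y, ∃ c : ℂ, ρ g * ρ y = c • (ρ y * ρ g) := fun y => by
    obtain ⟨c, hc⟩ := hcomm y
    exact ⟨c, twist_of_commutator ρ hc⟩
  choose f hf using htw
  have huniq : ∀ y (c : ℂ), ρ g * ρ y = c • (ρ y * ρ g) → f y = c := by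
    intro y c hc
    rw [hf y, ← map_mul] at hc
    exact smul_left_injective ℂ (map_ne_zero_of_nontrivial ρ (y * g)) hc
  let φ : G →* ℂ :=
    { toFun := f
      map_one' := huniq 1 1 (by simp)
      map_mul' := by
        intro a b
        apply huniq
        rw [map_mul, ← mul_assoc, hf a, smul_mul_assoc, mul_assoc, hf b, mul_smul_comm, smul_smul,
          mul_assoc] }
  refine ⟨g, φ.toHomUnits, hord, hcomm, hf, ?_⟩
  have hpow : ∀ y (i : ℕ), ρ g ^ i * ρ y = f y ^ i • (ρ y * ρ g ^ i) := by
    intro y i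
    induction i with
    | zero => simp
    | succ i ih =>
      rw [pow_succ', mul_assoc, ih, mul_smul_comm, ← mul_assoc, hf y, smul_mul_assoc, smul_smul,
        mul_assoc, ← pow_succ', pow_succ (f y)]
  have hfp : ∀ y, f y ^ p = 1 := by
    intro y
    have hgp : g ^ p ∈ scalarSubgroup ρ := by
      rw [← QuotientGroup.eq_one_iff, QuotientGroup.mk_pow, ← hord, pow_orderOf_eq_one]
    obtain ⟨c, hc⟩ := hgp
    have h1 := hpow y p
    have hcom : ρ g ^ p * ρ y = ρ y * ρ g ^ p := by
      rw [← map_pow, hc, smul_mul_assoc, mul_smul_comm, one_mul, mul_one]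
    rw [hcom, ← map_pow, ← map_mul] at h1
    have h2 : (1 : ℂ) • ρ (y * g ^ p) = f y ^ p • ρ (y * g ^ p) := by rw [one_smul]; exact h1
    exact (smul_left_injective ℂ (map_ne_zero_of_nontrivial ρ (y * g ^ p)) h2).symm
  have hle : φ.toHomUnits.range ≤ rootsOfUnity p ℂ := by
    rintro _ ⟨y, rfl⟩
    rw [mem_rootsOfUnity]
    exact Units.ext (hfp y)
  have : NeZero p := ⟨hp.ne_zero⟩
  have hdvd : Nat.card φ.toHomUnits.range ∣ p := by
    have := Subgroup.card_dvd_of_le hle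
    rwa [Complex.card_rootsOfUnity] at this
  rw [Subgroup.index_ker]
  refine ((Nat.dvd_prime hp).mp hdvd).resolve_left fun h1 => ?_
  have hg : g ∉ scalarSubgroup ρ := by
    rw [← QuotientGroup.eq_one_iff, ← orderOf_eq_one_iff, hord]
    exact hp.ne_one
  obtain ⟨y, c, hc1, hy⟩ := hρ.exists_twist hcomm hg
  have hbot := Subgroup.card_eq_one.mp h1
  have hy1 : φ.toHomUnits y ∈ φ.toHomUnits.range := ⟨y, rfl⟩
  rw [hbot, Subgroup.mem_bot] at hy1
  have : f y = 1 := congrArg Units.val hy1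
  exact hc1 (by rw [← huniq y c hy, this])

end

theorem LinearMap.trace_eq_sum_of_forall_eq_smul {V ι : Type*} [AddCommGroup V]
    [Module ℂ V] [Fintype ι] (b : Module.Basis ι ℂ V)
    (T : V →ₗ[ℂ] V) (μ : ι → ℂ) (h : ∀ i, T (b i) = μ i • b i) :
    LinearMap.trace ℂ V T = ∑ i, μ i := by
  classical
  rw [LinearMap.trace_eq_matrix_trace ℂ b, Matrix.trace]
  refine Finset.sum_congr rfl fun i _ => ?_
  rw [Matrix.diag_apply, LinearMap.toMatrix_apply, h, map_smul, Module.Basis.repr_self,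
    Finsupp.smul_single, Finsupp.single_eq_same, smul_eq_mul, mul_one]

section
variable {G V : Type*} [Group G] [AddCommGroup V] [Module ℂ V] [Nontrivial V]
  {ρ : G →* V →ₗ[ℂ] V}

theorem mem_ker_twist_iff {ψ : G →* ℂˣ} {g : G}
    (htw : ∀ y, ρ g * ρ y = (ψ y : ℂ) • (ρ y * ρ g)) (y : G) :
    y ∈ ψ.ker ↔ ρ g * ρ y = ρ y * ρ g := by
  rw [MonoidHom.mem_ker]
  constructor
  · intro h
    rw [htw, h, Units.val_one, one_smul]
  · intro h
    rw [htw y, ← map_mul] at h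
    have h2 : (ψ y : ℂ) • ρ (y * g) = (1 : ℂ) • ρ (y * g) := by rw [one_smul]; exact h
    exact Units.ext (smul_left_injective ℂ (map_ne_zero_of_nontrivial ρ (y * g)) h2)

variable [FiniteDimensional ℂ V]

/-- If `ρ` is an irreducible representation of a `p`-group of degree other than one, then there are
a normal subgroup `ψ.ker` of index `p` off which the character vanishes, and a subgroup `H` of it
such that the character vanishes on the elements of `H` that are not scalar. -/
theorem NoInvariantSubspace.exists_zeros_data [Finite G] {p : ℕ} [Fact p.Prime]
    (hρ : NoInvariantSubspace ρ) (hG : IsPGroup p G) (hdim : Module.finrank ℂ V ≠ 1) :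
    ∃ (g : G) (ψ : G →* ℂˣ) (H : Subgroup G),
      (∀ y, ρ g * ρ y = (ψ y : ℂ) • (ρ y * ρ g)) ∧ ψ.ker.index = p ∧
      g ∈ H ∧ scalarSubgroup ρ ≤ H ∧ H ≤ ψ.ker ∧
      (∀ h ∈ H, ∀ y, h * y * h⁻¹ * y⁻¹ ∈ scalarSubgroup ρ) ∧
      (∀ h ∈ H, ∀ y ∈ ψ.ker, ρ h * ρ y = ρ y * ρ h) ∧
      Nat.card H = Nat.card (scalarSubgroup ρ) * p ∧ p ≤ Nat.card (scalarSubgroup ρ) := by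
  have hp : p.Prime := Fact.out
  obtain ⟨g, ψ, hord, hcomm, htw, hind⟩ := hρ.exists_twist_hom hG hdim
  let H : Subgroup G := (Subgroup.zpowers (g : G ⧸ scalarSubgroup ρ)).comap
    (QuotientGroup.mk' (scalarSubgroup ρ))
  have hgH : g ∈ H := Subgroup.mem_zpowers (g : G ⧸ scalarSubgroup ρ)
  have hZH : scalarSubgroup ρ ≤ H := by
    intro z hz
    have : (z : G ⧸ scalarSubgroup ρ) = 1 := (QuotientGroup.eq_one_iff z).mpr hz
    change (z : G ⧸ scalarSubgroup ρ) ∈ Subgroup.zpowers (g : G ⧸ scalarSubgroup ρ)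
    rw [this]
    exact Subgroup.one_mem _
  have hHy : ∀ h ∈ H, ∀ y ∈ ψ.ker, ρ h * ρ y = ρ y * ρ h := by
    intro h hh y hy
    obtain ⟨i, hi⟩ := mem_powers_iff_mem_zpowers.mpr hh
    have hi : (g : G ⧸ scalarSubgroup ρ) ^ i = (h : G ⧸ scalarSubgroup ρ) := hi
    rw [← QuotientGroup.mk_pow] at hi
    obtain ⟨c, hc⟩ := QuotientGroup.eq.mp hi
    have hg : Commute (ρ g) (ρ y) := (mem_ker_twist_iff htw y).mp hy
    have hz : Commute (ρ ((g ^ i)⁻¹ * h)) (ρ y) := by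
      rw [hc]
      exact (Commute.one_left _).smul_left c
    have := (hg.pow_left i).mul_left hz
    rwa [← map_pow, ← map_mul, mul_inv_cancel_left] at this
  have hHC : H ≤ ψ.ker := by
    intro h hh
    rw [mem_ker_twist_iff htw]
    exact (hHy h hh g ((mem_ker_twist_iff htw g).mpr rfl)).symm
  refine ⟨g, ψ, H, htw, hind, hgH, hZH, hHC, ?_, hHy, ?_, ?_⟩
  · intro h hh
    rw [← QuotientGroup.mk_mem_center_iff]
    have hle : Subgroup.zpowers (g : G ⧸ scalarSubgroup ρ) ≤ Subgroup.center _ := by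
      rw [Subgroup.zpowers_le, QuotientGroup.mk_mem_center_iff]
      exact hcomm
    exact hle hh
  · have h1 := QuotientGroup.card_preimage_mk (scalarSubgroup ρ)
      (Subgroup.zpowers (g : G ⧸ scalarSubgroup ρ) : Set (G ⧸ scalarSubgroup ρ))
    have h2 : Nat.card (Subgroup.zpowers (g : G ⧸ scalarSubgroup ρ)) = p := by
      rw [Nat.card_zpowers, hord]
    exact h1.trans (congrArg _ h2)
  · have hdvd : p ∣ Nat.card (scalarSubgroup ρ) := by
      rcases (hG.to_subgroup (scalarSubgroup ρ)).card_eq_or_dvd with h | h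
      · exfalso
        have hbot := Subgroup.card_eq_one.mp h
        have hker : ψ.ker = ⊤ := by
          rw [eq_top_iff]
          intro y _
          have := hcomm y
          rw [hbot, Subgroup.mem_bot, mul_inv_eq_one, mul_inv_eq_iff_eq_mul] at this
          rw [mem_ker_twist_iff htw, ← map_mul, this, map_mul]
        rw [hker, Subgroup.index_top] at hind
        exact hp.ne_one hind.symm
      · exact h
    exact Nat.le_of_dvd Nat.card_pos hdvd

/-- An irreducible representation is monomial with respect to an abelian subgroup of the form
`ψ.ker`, where `ψ` records the commutators with a fixed element `g`. -/
theorem NoInvariantSubspace.exists_eigenbasis [Finite G] (hρ : NoInvariantSubspace ρ)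
    {g : G} {ψ : G →* ℂˣ} (htw : ∀ y, ρ g * ρ y = (ψ y : ℂ) • (ρ y * ρ g))
    (hab : ∀ x ∈ ψ.ker, ∀ y ∈ ψ.ker, x * y = y * x) :
    ∃ (θ : ψ.ker →* ℂ) (b : Module.Basis (G ⧸ ψ.ker) ℂ V), ∀ (q : G ⧸ ψ.ker) (u : G)
      (hu : q.out⁻¹ * u * q.out ∈ ψ.ker), ρ u (b q) = θ ⟨q.out⁻¹ * u * q.out, hu⟩ • b q := by
  obtain ⟨v, hv0, hv⟩ := exists_common_eigenvector (ρ '' (ψ.ker : Set G)) (by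
    rintro _ ⟨x, hx, rfl⟩ _ ⟨y, hy, rfl⟩
    rw [← map_mul, hab x hx y hy, map_mul])
  have hv' : ∀ u : ψ.ker, ∃ c : ℂ, ρ u v = c • v := fun u => hv _ ⟨u, u.2, rfl⟩
  choose f hf using hv'
  have huniq : ∀ (u : ψ.ker) (c : ℂ), ρ u v = c • v → f u = c := by
    intro u c hc
    rw [hf u] at hc
    exact smul_left_injective ℂ hv0 hc
  let θ : ψ.ker →* ℂ :=
    { toFun := f
      map_one' := huniq 1 1 (by simp)
      map_mul' := by
        intro a b
        apply huniq
        rw [Subgroup.coe_mul, map_mul, Module.End.mul_apply, hf b, map_smul, hf a, smul_smul,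
          mul_comm] }
  let e : G ⧸ ψ.ker → V := fun q => ρ q.out v
  have he0 : ∀ y, ρ y v ≠ 0 := by
    intro y h0
    apply hv0
    have : ρ (y⁻¹ * y) v = 0 := by rw [map_mul, Module.End.mul_apply, h0, map_zero]
    simpa using this
  have hgC : g ∈ ψ.ker := (mem_ker_twist_iff htw g).mpr rfl
  have hθ0 : θ ⟨g, hgC⟩ ≠ 0 := by
    have : IsUnit (θ ⟨g, hgC⟩) := (Group.isUnit _).map θ
    exact this.ne_zero
  have hli : LinearIndependent ℂ e := by
    refine Module.End.eigenvectors_linearIndependent' (ρ g)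
      (fun q : G ⧸ ψ.ker => (ψ q.out : ℂ) * θ ⟨g, hgC⟩) ?_ e ?_
    · intro q r hqr
      have h1 : ψ q.out = ψ r.out := Units.ext (mul_right_cancel₀ hθ0 hqr)
      rw [← q.out_eq', ← r.out_eq']
      apply QuotientGroup.eq.mpr
      rw [MonoidHom.mem_ker, map_mul, map_inv, h1, inv_mul_cancel]
    · intro q
      refine ⟨Module.End.mem_eigenspace_iff.mpr ?_, he0 _⟩
      have := congrArg (fun T => T v) (htw q.out)
      simp only [Module.End.mul_apply, LinearMap.smul_apply] at this
      rw [this, hf ⟨g, hgC⟩, map_smul, smul_smul]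
      rfl
  have hmem : ∀ y, ρ y v ∈ Submodule.span ℂ (Set.range e) := by
    intro y
    have hu : (y : G ⧸ ψ.ker).out⁻¹ * y ∈ ψ.ker :=
      QuotientGroup.eq.mp (Quotient.out_eq' (y : G ⧸ ψ.ker))
    have : ρ y v = f ⟨_, hu⟩ • e (y : G ⧸ ψ.ker) := by
      change _ = f ⟨_, hu⟩ • ρ _ v
      rw [← map_smul, ← hf ⟨_, hu⟩, ← Module.End.mul_apply, ← map_mul, mul_inv_cancel_left]
    rw [this]
    exact Submodule.smul_mem _ _ (Submodule.subset_span ⟨_, rfl⟩)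
  have hspan : Submodule.span ℂ (Set.range e) = ⊤ := by
    refine (hρ _ ?_).resolve_left ?_
    · intro x w hw
      induction hw using Submodule.span_induction with
      | mem w hw =>
        obtain ⟨q, rfl⟩ := hw
        change ρ x (ρ q.out v) ∈ _
        rw [← Module.End.mul_apply, ← map_mul]
        exact hmem _
      | zero => rw [map_zero]; exact Submodule.zero_mem _
      | add a b _ _ ha hb => rw [map_add]; exact Submodule.add_mem _ ha hb
      | smul c a _ ha => rw [map_smul]; exact Submodule.smul_mem _ _ ha
    · intro h0
      have := hmem 1
      rw [h0, Submodule.mem_bot] at this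
      exact he0 1 this
  refine ⟨θ, Module.Basis.mk hli hspan.ge, fun q u hu => ?_⟩
  rw [Module.Basis.mk_apply]
  change ρ u (ρ q.out v) = f ⟨_, hu⟩ • ρ q.out v
  rw [← map_smul, ← hf ⟨_, hu⟩, ← Module.End.mul_apply, ← Module.End.mul_apply, ← map_mul,
    ← map_mul]
  congr 2
  group

end

/-- If a sum of complex numbers of norm one equals the number of summands, then all are one. -/
theorem eq_one_of_sum_eq_card {ι : Type*} [Fintype ι] (μ : ι → ℂ) (hμ : ∀ i, ‖μ i‖ = 1)
    (h : ∑ i, μ i = Fintype.card ι) (i : ι) : μ i = 1 := by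
  have hle : ∀ i ∈ Finset.univ, (μ i).re ≤ 1 := fun i _ => (hμ i) ▸ Complex.re_le_norm (μ i)
  have hsum : ∑ i, (μ i).re = ∑ _i : ι, (1 : ℝ) := by
    rw [← Complex.re_sum, h]
    simp
  have hre := (Finset.sum_eq_sum_iff_of_le hle).mp hsum i (Finset.mem_univ i)
  have hn := Complex.sq_norm (μ i)
  rw [hμ i, Complex.normSq_apply, hre] at hn
  have him : (μ i).im = 0 := by nlinarith
  exact Complex.ext hre him

theorem norm_eq_one_of_finite {U : Type*} [Group U] [Finite U] (θ : U →* ℂ) (u : U) :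
    ‖θ u‖ = 1 := by
  refine Complex.norm_eq_one_of_pow_eq_one (n := Nat.card U) ?_ Nat.card_pos.ne'
  rw [← map_pow, pow_card_eq_one', map_one]

theorem isComplexCharacter_of_hom {U : Type*} [Group U] (θ : U →* ℂ) :
    IsComplexCharacter (fun u => θ u) := by
  let σ : Representation ℂ U ℂ :=
    { toFun := fun u => θ u • 1
      map_one' := by simp
      map_mul' := by intro a b; rw [map_mul, smul_mul_smul_comm, one_mul] }
  refine ⟨FDRep.of σ, ?_⟩
  ext u
  change LinearMap.trace ℂ ℂ (θ u • 1) = θ u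
  rw [map_smul, LinearMap.trace_one, Module.finrank_self]
  simp

theorem inducedCharacter_eq_zero {G : Type*} [Group G] [Fintype G] (H : Subgroup G)
    [hH : H.Normal] (θ : H → ℂ) {g : G} (hg : g ∉ H) : inducedCharacter H θ g = 0 := by
  rw [inducedCharacter, Finset.sum_eq_zero, mul_zero]
  intro x _
  rw [dif_neg]
  intro h
  apply hg
  have := hH.conj_mem _ h x⁻¹
  simpa [mul_assoc] using this

theorem inducedCharacter_eq_sum_of_abelian {G : Type*} [Group G] [Fintype G] (U : Subgroup G)
    [Fintype (G ⧸ U)] (hab : ∀ x ∈ U, ∀ y ∈ U, x * y = y * x)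
    (θ : U → ℂ) {g : G} (hg : ∀ x, x⁻¹ * g * x ∈ U) :
    inducedCharacter U θ g = ∑ q : G ⧸ U, θ ⟨q.out⁻¹ * g * q.out, hg _⟩ := by
  classical
  have h1 : ∀ x : G, (if h : x⁻¹ * g * x⁻¹⁻¹ ∈ U then θ ⟨x⁻¹ * g * x⁻¹⁻¹, h⟩ else 0)
      = θ ⟨(x : G ⧸ U).out⁻¹ * g * (x : G ⧸ U).out, hg _⟩ := by
    intro x
    rw [dif_pos (by simpa using hg x)]
    congr 1
    ext
    have hu : (x : G ⧸ U).out⁻¹ * x ∈ U :=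
      QuotientGroup.eq.mp (Quotient.out_eq' (x : G ⧸ U))
    set t := (x : G ⧸ U).out
    have h2 := hab _ hu _ (hg x)
    change x⁻¹ * g * x⁻¹⁻¹ = t⁻¹ * g * t
    calc x⁻¹ * g * x⁻¹⁻¹ = (x⁻¹ * g * x) * (t⁻¹ * x) * (t⁻¹ * x)⁻¹ := by group
      _ = t⁻¹ * g * t := by rw [← h2]; group
  let F : G ⧸ U → ℂ := fun q => θ ⟨q.out⁻¹ * g * q.out, hg _⟩
  have h3 : ∑ x : G, F (x : G ⧸ U) = (Nat.card U : ℂ) * ∑ q, F q := by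
    rw [← Fintype.sum_equiv (Subgroup.groupEquivQuotientProdSubgroup (s := U)).symm
      (fun r => F r.1) (fun x => F (x : G ⧸ U)) ?_]
    · rw [Fintype.sum_prod_type]
      simp [Finset.mul_sum, Nat.card_eq_fintype_card]
    · rintro r
      obtain ⟨x, rfl⟩ := (Subgroup.groupEquivQuotientProdSubgroup (s := U)).surjective r
      rw [Equiv.symm_apply_apply]
      rfl
  rw [inducedCharacter, ← Fintype.sum_equiv (Equiv.inv G) _ _ (fun x => rfl)]
  simp only [Equiv.inv_apply]
  rw [Finset.sum_congr rfl (fun x _ => h1 x)]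
  change _ * ∑ x : G, F (x : G ⧸ U) = ∑ q, F q
  rw [h3, ← mul_assoc, inv_mul_cancel₀, one_mul]
  exact Nat.cast_ne_zero.mpr Nat.card_pos.ne'

theorem scalarSubgroup_eq_center {G V : Type*} [Group G] [AddCommGroup V] [Module ℂ V]
    [Nontrivial V] [FiniteDimensional ℂ V] {ρ : G →* V →ₗ[ℂ] V} (hρ : NoInvariantSubspace ρ)
    (hinj : Function.Injective ρ) : scalarSubgroup ρ = Subgroup.center G := by
  ext z
  rw [Subgroup.mem_center_iff, mem_scalarSubgroup]
  constructor
  · rintro ⟨c, hc⟩ y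
    apply hinj
    rw [map_mul, map_mul, hc, mul_smul_comm, smul_mul_assoc, one_mul, mul_one]
  · intro h
    apply hρ.exists_eq_smul_one
    intro y
    rw [← map_mul, ← map_mul, h]

theorem ncard_compl_union_sdiff {G : Type*} [Group G] [Finite G] {C H Z : Subgroup G}
    (hHC : H ≤ C) (hZH : Z ≤ H) :
    ((C : Set G)ᶜ ∪ ((H : Set G) \ Z)).ncard =
      (Nat.card G - Nat.card C) + (Nat.card H - Nat.card Z) := by
  rw [Set.ncard_union_eq ?_ (Set.toFinite _) (Set.toFinite _), Set.ncard_compl,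
    Set.ncard_sdiff (show (Z : Set G) ⊆ H from hZH) (Set.toFinite _)]
  · rfl
  · rw [Set.disjoint_left]
    intro x hx hx'
    exact hx (hHC hx'.1)

section
variable {G V : Type*} [Group G] [AddCommGroup V] [Module ℂ V]
    [Nontrivial V] [FiniteDimensional ℂ V] {ρ : G →* V →ₗ[ℂ] V}

theorem trace_eq_zero_of_commutator_mem_center (hρ : NoInvariantSubspace ρ)
    (hinj : Function.Injective ρ) {k y : G} (hc : k * y * k⁻¹ * y⁻¹ ∈ Subgroup.center G)
    (hne : k * y * k⁻¹ * y⁻¹ ≠ 1) :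
    LinearMap.trace ℂ V (ρ k) = 0 ∧ LinearMap.trace ℂ V (ρ y) = 0 := by
  rw [← scalarSubgroup_eq_center hρ hinj] at hc
  obtain ⟨c, hc⟩ := hc
  have hc1 : c ≠ 1 := by
    rintro rfl
    apply hne
    apply hinj
    rw [hc, one_smul, map_one]
  have htw := twist_of_commutator ρ hc
  exact ⟨trace_eq_zero_of_twist ρ (by simpa using hc1) (inv_twist ρ htw (twist_ne_zero htw)),
    trace_eq_zero_of_twist ρ hc1 htw⟩

theorem NoInvariantSubspace.zeros_of_pgroup [Fintype G] {p n : ℕ} (hp : p.Prime)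
    (hG : Nat.card G = p ^ n) (hρ : NoInvariantSubspace ρ) (hdim : Module.finrank ℂ V ≠ 1)
    (χ : G → ℂ) (hχ : ∀ g, χ g = LinearMap.trace ℂ V (ρ g)) :
    p ^ n - p ^ (n - 1) + (p ^ 2 - p) ≤ {g : G | χ g = 0}.ncard ∧
    ({g : G | χ g = 0}.ncard = p ^ n - p ^ (n - 1) + (p ^ 2 - p) →
      IsFaithfulCharacter χ ∧
      χ 1 = (p : ℂ) ∧
      Nat.card (Subgroup.center G) = p ∧
      HasMaximalClass G n ∧
      (3 < n → Nat.card (Subgroup.upperCentralSeries G 2) = p ^ 2) ∧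
      ∃ U : Subgroup G, U.index = p ∧ (∀ x ∈ U, ∀ y ∈ U, x * y = y * x) ∧
        {g : G | χ g = 0} =
          (U : Set G)ᶜ ∪
            ((Subgroup.upperCentralSeries G 2 : Set G) \ (Subgroup.center G : Set G)) ∧
        (3 < n → ∀ M : Subgroup G, IsCoatom M → (IsInducedFrom χ M ↔ M = U))) := by
  have : Fact p.Prime := ⟨hp⟩
  have hpg : IsPGroup p G := IsPGroup.of_card hG
  obtain ⟨g, ψ, H, htw, hind, hgH, hZH, hHC, hHcomm, hHy, hcardH, hcardZ⟩ :=
    hρ.exists_zeros_data hpg hdim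
  have hgC : g ∈ ψ.ker := (mem_ker_twist_iff htw g).mpr rfl
  have hzC : ∀ y, y ∉ ψ.ker → χ y = 0 := by
    intro y hy
    rw [hχ]
    refine trace_eq_zero_of_twist ρ (fun h1 => hy ?_) (htw y)
    exact Units.ext h1
  have hsub : (ψ.ker : Set G)ᶜ ∪ ((H : Set G) \ scalarSubgroup ρ) ⊆ {g : G | χ g = 0} := by
    rintro y (hy | ⟨hyH, hyZ⟩)
    · exact hzC y hy
    · change χ y = 0
      rw [hχ]
      exact hρ.trace_eq_zero (hHcomm y hyH) hyZ
  have hn0 : n ≠ 0 := by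
    rintro rfl
    have := ψ.ker.index_dvd_card
    rw [hind, hG, pow_zero] at this
    exact hp.one_lt.not_ge (Nat.le_of_dvd one_pos this)
  have hcardC : Nat.card ψ.ker = p ^ (n - 1) := by
    have h1 := ψ.ker.card_mul_index
    rw [hind, hG, ← Nat.sub_one_add_one hn0, pow_succ] at h1
    exact Nat.eq_of_mul_eq_mul_right hp.pos h1
  have hcount : ((ψ.ker : Set G)ᶜ ∪ ((H : Set G) \ scalarSubgroup ρ)).ncard =
      p ^ n - p ^ (n - 1) + Nat.card (scalarSubgroup ρ) * (p - 1) := by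
    rw [ncard_compl_union_sdiff hHC hZH, hG, hcardC, hcardH, Nat.mul_sub_one]
  have hsq : p ^ 2 - p = p * (p - 1) := by rw [Nat.mul_sub_one, sq]
  refine ⟨?_, fun heq => ?_⟩
  · refine le_trans ?_ (Set.ncard_le_ncard hsub (Set.toFinite _))
    rw [hcount, hsq]
    gcongr
  have hle := Set.ncard_le_ncard hsub (Set.toFinite _)
  rw [hcount, heq, hsq] at hle
  have hp1 : 0 < p - 1 := Nat.sub_pos_of_lt hp.one_lt
  have hZp : Nat.card (scalarSubgroup ρ) = p :=
    le_antisymm (Nat.le_of_mul_le_mul_right (Nat.le_of_add_le_add_left hle) hp1) hcardZ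
  have hzeros : (ψ.ker : Set G)ᶜ ∪ ((H : Set G) \ scalarSubgroup ρ) = {g : G | χ g = 0} := by
    refine Set.eq_of_subset_of_ncard_le hsub ?_ (Set.toFinite _)
    rw [hcount, heq, hZp, hsq]
  have hinj : Function.Injective ρ := by
    have hKZ : ρ.ker ≤ scalarSubgroup ρ := fun k hk =>
      ⟨1, by rw [one_smul]; exact hk⟩
    have hdvd := Subgroup.card_dvd_of_le hKZ
    rw [hZp] at hdvd
    rw [← MonoidHom.ker_eq_bot_iff, ← Subgroup.card_eq_one]
    refine ((Nat.dvd_prime hp).mp hdvd).resolve_right fun hK => ?_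
    have hKeq : ρ.ker = scalarSubgroup ρ :=
      Subgroup.eq_of_le_of_card_ge hKZ (by rw [hK, hZp])
    have hker : ψ.ker = ⊤ := by
      rw [eq_top_iff]
      intro y _
      have := hHcomm g hgH y
      rw [← hKeq, MonoidHom.mem_ker] at this
      have := twist_of_commutator ρ (c := 1) (by rw [this, one_smul])
      rw [mem_ker_twist_iff htw, this, one_smul]
    rw [hker, Subgroup.index_top] at hind
    exact hp.ne_one hind.symm
  have hZ : scalarSubgroup ρ = Subgroup.center G := scalarSubgroup_eq_center hρ hinj
  have hcomm0 : ∀ k y : G, k * y * k⁻¹ * y⁻¹ ∈ Subgroup.center G → k * y * k⁻¹ * y⁻¹ ≠ 1 →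
      χ k = 0 := fun k y h1 h2 => by
    rw [hχ]; exact (trace_eq_zero_of_commutator_mem_center hρ hinj h1 h2).1
  rw [hZ] at hZp hzeros hZH hHcomm
  have hHzero : ∀ k ∈ ψ.ker, χ k = 0 → k ∈ H := by
    intro k hk h0
    have : k ∈ {g : G | χ g = 0} := h0
    rw [← hzeros] at this
    exact (this.resolve_left (fun h => h hk)).1
  have hHcen : ∀ h ∈ H, ∀ y ∈ ψ.ker, h * y = y * h := fun h hh y hy => hinj (by
    rw [map_mul, map_mul, hHy h hh y hy])
  have hab : ∀ x ∈ ψ.ker, ∀ y ∈ ψ.ker, x * y = y * x := by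
    by_contra hcon
    obtain ⟨k, hk, y, hy, hcen, hne⟩ := hpg.exists_commutator_mem_center ψ.ker hcon
    apply hne
    rw [hHcen k (hHzero k hk (hcomm0 k y hcen hne)) y hy]
    group
  have hcardH' : Nat.card H = p ^ 2 := by rw [hcardH, hZ, hZp, sq]
  have hn2 : 2 ≤ n - 1 := by
    have := Subgroup.card_dvd_of_le hHC
    rw [hcardH', hcardC] at this
    exact (Nat.pow_dvd_pow_iff_le_right hp.one_lt).mp this
  have hHlt : 3 < n → H < ψ.ker := by
    intro hn
    refine lt_of_le_of_ne hHC fun h => ?_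
    rw [h, hcardC] at hcardH'
    have := Nat.pow_right_injective hp.two_le hcardH'
    omega
  have hmem2 : ∀ x, x ∈ Subgroup.upperCentralSeries G 2 ↔
      ∀ y, x * y * x⁻¹ * y⁻¹ ∈ Subgroup.center G := by
    intro x
    rw [Subgroup.mem_upperCentralSeries_succ_iff, Subgroup.upperCentralSeries_one]
    rfl
  have hH2 : H ≤ Subgroup.upperCentralSeries G 2 := fun h hh => (hmem2 h).mpr (hHcomm h hh)
  have hZ2zero : ∀ x ∈ Subgroup.upperCentralSeries G 2, x ∉ Subgroup.center G → χ x = 0 := by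
    intro x hx hxZ
    rw [hmem2] at hx
    by_contra h0
    apply hxZ
    rw [Subgroup.mem_center_iff]
    intro y
    by_contra hne
    refine h0 (hcomm0 x y (hx y) fun h1 => hne ?_)
    rw [mul_inv_eq_one, mul_inv_eq_iff_eq_mul] at h1
    exact h1.symm
  obtain ⟨θ, b, hb⟩ := hρ.exists_eigenbasis htw hab
  have hconj : ∀ u ∈ ψ.ker, ∀ x : G, x⁻¹ * u * x ∈ ψ.ker := fun u hu x => by
    have := ψ.normal_ker.conj_mem u hu x⁻¹
    rwa [inv_inv] at this
  let _ : Fintype (G ⧸ ψ.ker) := Fintype.ofFinite _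
  have hcardq : Fintype.card (G ⧸ ψ.ker) = p := by
    rw [← Nat.card_eq_fintype_card]; exact hind
  have htr : ∀ u (hu : u ∈ ψ.ker),
      χ u = ∑ q : G ⧸ ψ.ker, θ ⟨q.out⁻¹ * u * q.out, hconj u hu _⟩ := fun u hu => by
    rw [hχ]
    exact LinearMap.trace_eq_sum_of_forall_eq_smul b _ _ fun q => hb q u _
  have hχ1 : χ 1 = (p : ℂ) := by
    rw [hχ, map_one, LinearMap.trace_one, Module.finrank_eq_card_basis b, hcardq]
  have hindU : IsInducedFrom χ ψ.ker := by
    refine ⟨fun u => θ u, isComplexCharacter_of_hom θ, ?_⟩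
    ext u
    by_cases hu : u ∈ ψ.ker
    · rw [htr u hu, inducedCharacter_eq_sum_of_abelian ψ.ker hab _ (hconj u hu)]
    · rw [hzC u hu, inducedCharacter_eq_zero ψ.ker _ hu]
  have hcoatom : IsCoatom ψ.ker := ψ.ker.isCoatom_of_prime_index (hind ▸ hp)
  refine ⟨?_, hχ1, hZp, hasMaximalClass_of_abelian_coatom hG (by omega) ψ.ker hab hind hZp, ?_,
    ψ.ker, hind, hab, ?_, ?_⟩
  · refine Set.eq_singleton_iff_unique_mem.mpr ⟨rfl, fun u hu => ?_⟩
    have hu : χ u = p := (show χ u = χ 1 from hu).trans hχ1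
    have huC : u ∈ ψ.ker := by
      by_contra h
      rw [hzC u h] at hu
      exact hp.ne_zero (Nat.cast_eq_zero.mp hu.symm)
    have hone := eq_one_of_sum_eq_card
      (fun q : G ⧸ ψ.ker => θ ⟨q.out⁻¹ * u * q.out, hconj u huC _⟩)
      (fun q => norm_eq_one_of_finite θ _) (by rw [← htr u huC, hu, hcardq])
    apply hinj
    rw [map_one]
    refine b.ext fun q => ?_
    have hq : θ ⟨q.out⁻¹ * u * q.out, hconj u huC _⟩ = 1 := hone q
    rw [hb q u (hconj u huC _), hq, one_smul, Module.End.one_apply]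
  · intro hn
    have hle2 : Subgroup.upperCentralSeries G 2 ≤ ψ.ker := by
      intro x hx
      have hcen : ψ.ker ≤ Subgroup.centralizer {x} := by
        refine Subgroup.le_of_sdiff_subset (hHlt hn) fun k hk hkH => ?_
        rw [Subgroup.mem_centralizer_singleton_iff]
        have h1 := (Subgroup.center G).inv_mem ((hmem2 x).mp hx k)
        have e : (x * k * x⁻¹ * k⁻¹)⁻¹ = k * x * k⁻¹ * x⁻¹ := by group
        rw [e] at h1
        by_contra hne
        refine hkH (hHzero k hk (hcomm0 k x h1 fun h => hne ?_))
        rwa [mul_inv_eq_one, mul_inv_eq_iff_eq_mul] at h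
      rw [mem_ker_twist_iff htw, ← map_mul, ← map_mul,
        Subgroup.mem_centralizer_singleton_iff.mp (hcen hgC)]
    have heq2 : Subgroup.upperCentralSeries G 2 = H := by
      refine le_antisymm (fun x hx => ?_) hH2
      by_cases hxZ : x ∈ Subgroup.center G
      · exact hZH hxZ
      · exact hHzero x (hle2 hx) (hZ2zero x hx hxZ)
    rw [heq2, hcardH']
  · refine Set.Subset.antisymm ?_ ?_
    · rw [← hzeros]
      exact Set.union_subset_union_right _ (Set.sdiff_subset_sdiff_left hH2)
    · rintro x (hx | ⟨hx, hxZ⟩)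
      · exact hzC x hx
      · exact hZ2zero x hx hxZ
  · intro hn M hM
    refine ⟨?_, fun h => h ▸ hindU⟩
    rintro ⟨τ, -, hτ⟩
    have hnil : Group.IsNilpotent G := hpg.isNilpotent
    have hMn : M.Normal := Subgroup.NormalizerCondition.normal_of_coatom M
      Group.normalizerCondition_of_isNilpotent hM
    have hle : ψ.ker ≤ M := by
      refine Subgroup.le_of_sdiff_subset (hHlt hn) fun k hk hkH => ?_
      by_contra hkM
      refine hkH (hHzero k hk ?_)
      rw [← hτ]
      exact inducedCharacter_eq_zero M τ hkM
    exact ((hcoatom.le_iff.mp hle).resolve_left hM.1)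

end

theorem stmt7 {G : Type*} [Group G] [Fintype G] {p n : ℕ} (hp : p.Prime)
    (hG : Nat.card G = p ^ n) (χ : G → ℂ) (hχ : IsIrrCharacter χ) (hnl : χ 1 ≠ 1) :
    p ^ n - p ^ (n - 1) + (p ^ 2 - p) ≤ {g : G | χ g = 0}.ncard ∧
    ({g : G | χ g = 0}.ncard = p ^ n - p ^ (n - 1) + (p ^ 2 - p) →
      IsFaithfulCharacter χ ∧
      χ 1 = (p : ℂ) ∧
      Nat.card (Subgroup.center G) = p ∧
      HasMaximalClass G n ∧
      (3 < n → Nat.card (Subgroup.upperCentralSeries G 2) = p ^ 2) ∧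
      ∃ U : Subgroup G, U.index = p ∧ (∀ x ∈ U, ∀ y ∈ U, x * y = y * x) ∧
        {g : G | χ g = 0} =
          (U : Set G)ᶜ ∪
            ((Subgroup.upperCentralSeries G 2 : Set G) \ (Subgroup.center G : Set G)) ∧
        (3 < n → ∀ M : Subgroup G, IsCoatom M → (IsInducedFrom χ M ↔ M = U))) := by
  obtain ⟨V, hV, rfl⟩ := hχ
  have hnt : Nontrivial V := V.nontrivial_of_simple
  refine V.noInvariantSubspace_of_simple.zeros_of_pgroup hp hG (fun h1 => hnl ?_) _ fun g => rfl
  rw [FDRep.char_one, h1, Nat.cast_one]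
end
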